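/- If G is a simple planar graph on n vertices in which every vertex has even degree, then the edge set E(G) can be partitioned into at most ⌊(n−1)/2⌋ cycles. -/

import Mathlib

/-!
The proof is by induction on the number `s` of non-isolated vertices, with the bound
`⌊(s - 1) / 2⌋`.

Suppose that after removing the edges of a cycle `F`, two vertices `u` and `v` can be suppressed:
each becomes isolated, or keeps exactly two neighbours, which are nonadjacent, and the two
suppressions do not add the same edge. The resulting graph is even and planar and has two vertices
fewer, so it has a decomposition with one cycle fewer than allowed. Subdividing the added edges
again and adding `F` decomposes `G`. A graph with a cut vertex is split there, so `G` may be assumed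
to be 2-connected.

The bound `|E| ≤ 3 * n - 6`, which holds for graphs without `K₅` minor by contracting edges in few
triangles, gives at least three vertices of degree at most `4`. Either two of them are nonadjacent,
or they form a triangle of vertices of degree `2`, whose removal isolates two vertices.

Let `u` and `v` be nonadjacent of degree at most `4`. By Whitney's argument there are two internally
disjoint paths from `u` to `v`, a link, whose union is a candidate for `F`. The only obstacle at `u`
is an edge between the two remaining neighbours `c` and `d` of `u`. It is harmless if `cd` is an
edge of the link. If `c` and `d` are off the link and some neighbour `x` of `u` on the link is
adjacent to `c`, then rerouting `u, x, …` to `u, d, c, x, …` leaves the remaining neighbours `x` and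
`c` joined by an edge of the link. The end `u` is bad if `c` and `d` are adjacent and neither is
adjacent to a neighbour of `u` on the link. A link that is bad at neither end exists, and a shortest
one is, at each end, either harmless or reroutable. The exceptions arise when the two ends
interfere: if a remaining neighbour is shared by both ends, minimality forces paths of length `2`,
and then another link works, or there is a `K₃,₃` subgraph, or `u` and `v` have the same four
neighbours, a case treated directly.
-/

open SimpleGraph

attribute [local instance] Classical.propDecidable

/-- A cycle in a graph: a connected, 2-regular subgraph. -/
def IsCycleSubgraph {V : Type*} {G : SimpleGraph V} (C : G.Subgraph) : Prop :=
  C.coe.Connected ∧ ∀ v ∈ C.verts, (C.neighborSet v).ncard = 2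

/-- Graph minor relation (via branch sets). -/
def HasGraphMinor {V : Type*} {W : Type*} (G : SimpleGraph V) (H : SimpleGraph W) : Prop :=
  ∃ f : W → Set V,
    (∀ w, (f w).Nonempty) ∧
    (∀ w, (G.induce (f w)).Connected) ∧
    (Pairwise fun w₁ w₂ => Disjoint (f w₁) (f w₂)) ∧
    ∀ ⦃w₁ w₂⦄, H.Adj w₁ w₂ → ∃ v₁ ∈ f w₁, ∃ v₂ ∈ f w₂, G.Adj v₁ v₂

/-- Planarity, via Wagner's theorem: no `K₅` minor and no `K_{3,3}` minor. -/
def IsPlanar {V : Type*} (G : SimpleGraph V) : Prop :=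
  ¬ HasGraphMinor G (completeGraph (Fin 5)) ∧
  ¬ HasGraphMinor G (completeBipartiteGraph (Fin 3) (Fin 3))

section Minors

variable {V V' W : Type*} {G H : SimpleGraph V} {K : SimpleGraph W}

lemma HasGraphMinor.mono (hle : H ≤ G) (h : HasGraphMinor H K) : HasGraphMinor G K := by
  obtain ⟨B, hne, hconn, hdisj, hadj⟩ := h
  refine ⟨B, hne, fun w => (hconn w).mono fun _ _ h => hle h, hdisj, fun w₁ w₂ hw => ?_⟩
  obtain ⟨a, ha, b, hb, hab⟩ := hadj hw
  exact ⟨a, ha, b, hb, hle hab⟩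

lemma preconnected_induce_preimage {f : V → V'}
    (hf : ∀ v, (G.induce (f ⁻¹' {v})).Preconnected) {S : Set V'}
    (hS : ((G.map f).induce S).Preconnected) : (G.induce (f ⁻¹' S)).Preconnected := by
  have fibre : ∀ a b : f ⁻¹' S, f a = f b → (G.induce (f ⁻¹' S)).Reachable a b := by
    intro a b hab
    have hsub : f ⁻¹' {f b} ⊆ f ⁻¹' S := Set.preimage_mono (Set.singleton_subset_iff.mpr b.2)
    exact (hf (f b) ⟨a, hab⟩ ⟨b, rfl⟩).map (induceHomOfLE G hsub).toHom
  have lift : ∀ s t : S, ((G.map f).induce S).Walk s t →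
      ∀ a b : f ⁻¹' S, f a = s → f b = t →
      (G.induce (f ⁻¹' S)).Reachable a b := by
    rintro s t walk
    induction walk with
    | nil => exact fun a b ha hb => fibre a b (ha.trans hb.symm)
    | @cons s s' t h _ ih =>
      intro a b ha hb
      obtain ⟨-, c, d, hcd, hc, hd⟩ := h
      have hcS : f c ∈ S := hc ▸ s.2
      have hdS : f d ∈ S := hd ▸ s'.2
      have hcd' : (G.induce (f ⁻¹' S)).Adj ⟨c, hcS⟩ ⟨d, hdS⟩ := hcd
      exact (fibre a ⟨c, hcS⟩ (ha.trans hc.symm)).trans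
        (hcd'.reachable.trans (ih ⟨d, hdS⟩ b hd hb))
  intro a b
  obtain ⟨p⟩ := hS ⟨f a, a.2⟩ ⟨f b, b.2⟩
  exact lift _ _ p a b rfl rfl

lemma HasGraphMinor.of_map {f : V → V'} (hf : ∀ v, (G.induce (f ⁻¹' {v})).Preconnected)
    (hK : ∀ w, ∃ w', K.Adj w w') (h : HasGraphMinor (G.map f) K) : HasGraphMinor G K := by
  obtain ⟨B, -, hconn, hdisj, hadj⟩ := h
  refine ⟨fun w => f ⁻¹' B w, fun w => ?nonempty, fun w => ?connected,
    fun _ _ hne => (hdisj hne).preimage f, fun w₁ w₂ hw => ?adj⟩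
  case nonempty =>
    obtain ⟨w', hw⟩ := hK w
    obtain ⟨_, ha, _, -, -, a, -, -, rfl, -⟩ := hadj hw
    exact ⟨a, ha⟩
  case connected =>
    obtain ⟨w', hw⟩ := hK w
    obtain ⟨_, ha, _, -, -, a, -, -, rfl, -⟩ := hadj hw
    exact (connected_iff _).mpr
      ⟨preconnected_induce_preimage hf (hconn w).preconnected, ⟨⟨a, ha⟩⟩⟩
  case adj =>
    obtain ⟨_, ha, _, hb, -, a, b, hab, rfl, rfl⟩ := hadj hw
    exact ⟨a, ha, b, hb, hab⟩

/-- The contraction of `y` into `x`, kept on the vertex type `V`: `x` inherits the neighbours of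
`y`, and `y` becomes isolated. -/
noncomputable def contraction (G : SimpleGraph V) (x y : V) : SimpleGraph V :=
  G.map (Function.update id y x)

lemma contraction_adj {x y a b : V} (hxy : x ≠ y) : (contraction G x y).Adj a b ↔
    a ≠ b ∧ a ≠ y ∧ b ≠ y ∧ (G.Adj a b ∨ (a = x ∧ G.Adj y b) ∨ (b = x ∧ G.Adj y a)) := by
  simp only [contraction, map_adj', Function.update_apply, id]
  constructor
  · rintro ⟨hab, c, d, hcd, rfl, rfl⟩
    have := hcd.symm
    grind
  · rintro ⟨hab, hay, hby, h | ⟨rfl, h⟩ | ⟨rfl, h⟩⟩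
    · exact ⟨hab, a, b, h, by simp [hay], by simp [hby]⟩
    · exact ⟨hab, y, b, h, by simp, by simp [hby]⟩
    · exact ⟨hab, a, y, h.symm, by simp [hay], by simp⟩

lemma deleteIncidenceSet_le_contraction {x y : V} (hxy : x ≠ y) :
    G.deleteIncidenceSet y ≤ contraction G x y := by
  intro a b h
  rw [deleteIncidenceSet_adj] at h
  exact (contraction_adj hxy).mpr ⟨h.1.ne, h.2.1, h.2.2, .inl h.1⟩

lemma support_contraction_subset {x y : V} (hxy : G.Adj x y) :
    (contraction G x y).support ⊆ G.support \ {y} := by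
  rintro a ⟨b, hab⟩
  obtain ⟨-, hay, -, h | ⟨rfl, -⟩ | ⟨-, h⟩⟩ := (contraction_adj hxy.ne).mp hab
  exacts [⟨⟨_, h⟩, hay⟩, ⟨⟨_, hxy⟩, hay⟩, ⟨⟨_, h.symm⟩, hay⟩]

lemma HasGraphMinor.of_contraction {x y : V} (hxy : G.Adj x y) (hK : ∀ w, ∃ w', K.Adj w w')
    (h : HasGraphMinor (contraction G x y) K) : HasGraphMinor G K := by
  refine h.of_map (fun z a b => ?_) hK
  have hab := a.2.trans b.2.symm
  simp only [Function.update_apply, id] at hab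
  by_cases heq : a = b
  · rw [heq]
  · refine Adj.reachable (show G.Adj a b from ?_)
    have := hxy.symm
    grind

lemma exists_adj_completeGraph {n : ℕ} (w : Fin (n + 2)) :
    ∃ w', (completeGraph (Fin (n + 2))).Adj w w' :=
  (exists_ne w).imp fun _ h => h.symm

lemma exists_adj_completeBipartiteGraph {m n : ℕ} (w : Fin (m + 1) ⊕ Fin (n + 1)) :
    ∃ w', (completeBipartiteGraph (Fin (m + 1)) (Fin (n + 1))).Adj w w' := by
  rcases w with w | w
  · exact ⟨Sum.inr 0, by simp⟩
  · exact ⟨Sum.inl 0, by simp⟩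

lemma IsPlanar.mono (hle : H ≤ G) (h : IsPlanar G) : IsPlanar H :=
  ⟨fun h' => h.1 (h'.mono hle), fun h' => h.2 (h'.mono hle)⟩

lemma IsPlanar.contraction {x y : V} (hxy : G.Adj x y) (h : IsPlanar G) :
    IsPlanar (contraction G x y) :=
  ⟨fun h' => h.1 (h'.of_contraction hxy exists_adj_completeGraph),
    fun h' => h.2 (h'.of_contraction hxy exists_adj_completeBipartiteGraph)⟩

lemma HasGraphMinor.of_copy (f : Copy K G) : HasGraphMinor G K := by
  refine ⟨fun w => {f w}, fun w => Set.singleton_nonempty _, fun w => ?_, ?_, ?_⟩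
  · rw [induce_singleton_eq_top]
    exact connected_top
  · exact fun _ _ hne => Set.disjoint_singleton.mpr fun h => hne (f.injective h)
  · exact fun w₁ w₂ hw => ⟨_, rfl, _, rfl, f.toHom.map_adj hw⟩

lemma cliqueFree_of_not_hasGraphMinor {n : ℕ}
    (h : ¬ HasGraphMinor G (completeGraph (Fin n))) : G.CliqueFree n :=
  cliqueFree_iff.mpr ⟨fun f => h (.of_copy f)⟩

lemma HasGraphMinor.completeGraph_of_wheel {v a b c d e : V} (hab : a ≠ b) (hde : G.Adj d e)
    (hv : ∀ z ∈ ({a, b, c, d, e} : Set V), G.Adj v z)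
    (ha : ∀ z ∈ ({c, d, e} : Set V), G.Adj a z) (hb : ∀ z ∈ ({c, d, e} : Set V), G.Adj b z)
    (hcd : c ≠ d) (hce : c ≠ e) : HasGraphMinor G (completeGraph (Fin 5)) := by
  simp only [Set.mem_insert_iff, Set.mem_singleton_iff, forall_eq_or_imp, forall_eq] at hv ha hb
  obtain ⟨hva, hvb, hvc, hvd, hve⟩ := hv
  obtain ⟨hac, had, hae⟩ := ha
  obtain ⟨hbc, hbd, hbe⟩ := hb
  by_contra hK
  have hfree := cliqueFree_of_not_hasGraphMinor
    fun h => hK (h.of_contraction hac exists_adj_completeGraph)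
  have hkeep : ∀ {p q}, G.Adj p q → p ≠ c → q ≠ c → (contraction G a c).Adj p q :=
    fun h hp hq => (contraction_adj hac.ne).mpr ⟨h.ne, hp, hq, .inl h⟩
  have hab' : (contraction G a c).Adj a b :=
    (contraction_adj hac.ne).mpr ⟨hab, hac.ne, hbc.ne, .inr (.inl ⟨rfl, hbc.symm⟩)⟩
  have hbde : (contraction G a c).IsNClique 3 {b, d, e} := is3Clique_triple_iff.mpr
    ⟨hkeep hbd hbc.ne hcd.symm, hkeep hbe hbc.ne hce.symm, hkeep hde hcd.symm hce.symm⟩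
  have habde : (contraction G a c).IsNClique 4 {a, b, d, e} := hbde.insert (by
    simpa using ⟨hab', hkeep had hac.ne hcd.symm, hkeep hae hac.ne hce.symm⟩)
  have hvabde : (contraction G a c).IsNClique 5 {v, a, b, d, e} := habde.insert (by
    simpa using ⟨hkeep hva hvc.ne hac.ne, hkeep hvb hvc.ne hbc.ne,
      hkeep hvd hvc.ne hcd.symm, hkeep hve hvc.ne hce.symm⟩)
  exact hfree _ hvabde

lemma IsPlanar.not_forall_adj_k33 (h : IsPlanar G) {l r : Fin 3 → V} (hl : l.Injective)
    (hr : r.Injective) : ¬ ∀ i j, G.Adj (l i) (r j) := by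
  intro hadj
  refine h.2 (.of_copy ⟨⟨Sum.elim l r, ?_⟩, hl.sumElim hr fun i j => (hadj i j).ne⟩)
  rintro (i | i) (j | j) hw
  · simp at hw
  · exact hadj i j
  · exact (hadj j i).symm
  · simp at hw

lemma IsPlanar.not_adj_of_k33_delete_edge (h : IsPlanar G) {x y z u v w : V} (hxy : x ≠ y)
    (hxz : x ≠ z) (hyz : y ≠ z) (huv : u ≠ v) (huw : u ≠ w) (hvw : v ≠ w) (hxu : G.Adj x u)
    (hxv : G.Adj x v) (hxw : G.Adj x w) (hyu : G.Adj y u) (hyv : G.Adj y v) (hyw : G.Adj y w)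
    (hzu : G.Adj z u) (hzv : G.Adj z v) : ¬ G.Adj z w := by
  intro hzw
  refine h.not_forall_adj_k33 (l := ![x, y, z]) (r := ![u, v, w]) ?_ ?_ fun i j => ?_
  · intro i j hij
    fin_cases i <;> fin_cases j <;> simp_all
  · intro i j hij
    fin_cases i <;> fin_cases j <;> simp_all
  · fin_cases i <;> fin_cases j <;> assumption

end Minors

section EdgeBound

variable {V : Type*} {G : SimpleGraph V}

lemma exists_le_ncard_edgeSet_eq {k : ℕ} (hk : k ≤ G.edgeSet.ncard) :
    ∃ H ≤ G, H.edgeSet.ncard = k := by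
  obtain ⟨F, hF, hFk⟩ := Set.exists_subset_card_eq hk
  have hle : fromEdgeSet F ≤ G := fun a b h => hF ((fromEdgeSet_adj F).mp h).1
  refine ⟨fromEdgeSet F, hle, ?_⟩
  rw [edgeSet_fromEdgeSet, Disjoint.sdiff_eq_left, hFk]
  exact Set.disjoint_left.mpr fun e he => G.not_isDiag_of_mem_edgeSet (hF he)

variable [Finite V]

lemma sum_ncard_neighborSet {W : Finset V} (hW : G.support ⊆ W) :
    ∑ v ∈ W, (G.neighborSet v).ncard = 2 * G.edgeSet.ncard := by
  have := Fintype.ofFinite V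
  simp_rw [← coe_edgeFinset, ← coe_neighborFinset, Set.ncard_coe_finset,
    card_neighborFinset_eq_degree, ← sum_degrees_eq_twice_card_edges]
  exact Finset.sum_subset (Finset.subset_univ _) fun v _ hv =>
    (degree_eq_zero_iff_notMem_support G v).mpr fun h => hv (hW h)

variable (G) in
lemma ncard_edgeSet_le_deleteIncidenceSet (v : V) : G.edgeSet.ncard ≤
    (G.deleteIncidenceSet v).edgeSet.ncard + (G.neighborSet v).ncard := by
  rw [edgeSet_deleteIncidenceSet, ← Nat.card_coe_set_eq (G.neighborSet v),
    ← Nat.card_congr (G.incidenceSetEquivNeighborSet v), Nat.card_coe_set_eq]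
  exact Set.ncard_le_ncard_sdiff_add_ncard _ _

lemma ncard_edgeSet_le_contraction {x y : V} (hxy : G.Adj x y) : G.edgeSet.ncard ≤
    (contraction G x y).edgeSet.ncard + (G.neighborSet x ∩ G.neighborSet y).ncard + 1 := by
  let common := G.neighborSet x ∩ G.neighborSet y
  let moved := G.neighborSet y \ insert x common
  have hdisj : Disjoint (G.deleteIncidenceSet y).edgeSet ((s(x, ·)) '' moved) := by
    rw [Set.disjoint_left]
    rintro _ he ⟨b, hb, rfl⟩
    rw [mem_edgeSet, deleteIncidenceSet_adj] at he
    exact hb.2 (.inr ⟨he.1, hb.1⟩)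
  have hsub : (G.deleteIncidenceSet y).edgeSet ∪ (s(x, ·)) '' moved ⊆
      (contraction G x y).edgeSet := by
    refine Set.union_subset (edgeSet_mono (deleteIncidenceSet_le_contraction hxy.ne)) ?_
    rintro _ ⟨b, hb, rfl⟩
    exact (contraction_adj hxy.ne).mpr
      ⟨fun h => hb.2 (.inl h.symm), hxy.ne, hb.1.ne', .inr (.inl ⟨rfl, hb.1⟩)⟩
  have hcard := Set.ncard_le_ncard hsub
  rw [Set.ncard_union_eq hdisj,
    Set.ncard_image_of_injective _ fun _ _ => Sym2.congr_right.mp] at hcard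
  have hdel := ncard_edgeSet_le_deleteIncidenceSet G y
  have hmoved := Set.ncard_le_ncard_sdiff_add_ncard (G.neighborSet y) (insert x common)
  have hcommon := Set.ncard_insert_le x common
  grind

lemma adj_of_three_le_ncard_inter {S : Set V} {w p q : V} (hS : S.ncard ≤ 5)
    (h3 : 3 ≤ (S ∩ G.neighborSet w).ncard) (hw : w ∈ S) (hp : p ∈ S) (hq : q ∈ S) (hpw : p ≠ w)
    (hqw : q ≠ w) (hpq : p ≠ q) (hwp : ¬ G.Adj w p) : G.Adj w q := by
  by_contra hwq
  have hsub : S ∩ G.neighborSet w ⊆ S \ {w, p, q} := by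
    rintro z ⟨hz, hwz⟩
    refine ⟨hz, ?_⟩
    rintro (rfl | rfl | rfl)
    exacts [hwz.ne rfl, hwp hwz, hwq hwz]
  have hcard := Set.ncard_le_ncard hsub
  rw [Set.ncard_sdiff (by grind),
    Set.ncard_eq_three.mpr ⟨w, p, q, hpw.symm, hqw.symm, hpq, rfl⟩] at hcard
  omega

lemma HasGraphMinor.completeGraph_of_three_le_ncard_inter {v : V}
    (h4 : 4 ≤ (G.neighborSet v).ncard) (h5 : (G.neighborSet v).ncard ≤ 5)
    (h3 : ∀ w, G.Adj v w → 3 ≤ (G.neighborSet v ∩ G.neighborSet w).ncard) :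
    HasGraphMinor G (completeGraph (Fin 5)) := by
  by_cases hclique : G.IsClique (G.neighborSet v)
  · by_contra hK
    have hS : G.IsNClique (G.neighborSet v).ncard (G.neighborSet v).toFinite.toFinset :=
      ⟨by simpa using hclique, (Set.ncard_eq_toFinset_card _).symm⟩
    exact (cliqueFree_of_not_hasGraphMinor hK).mono (by omega) _ (hS.insert (a := v) (by simp))
  obtain ⟨a, ha, b, hb, hab, hnab⟩ : ∃ a, G.Adj v a ∧ ∃ b, G.Adj v b ∧ a ≠ b ∧ ¬ G.Adj a b := by
    simpa [isClique_iff, Set.Pairwise] using hclique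
  have hmiss : ∀ {w p q}, G.Adj v w → G.Adj v p → G.Adj v q → p ≠ w → q ≠ w → p ≠ q →
      ¬ G.Adj w p → G.Adj w q := fun hw => adj_of_three_le_ncard_inter h5 (h3 _ hw) hw
  have hrest : (G.neighborSet v \ {a, b}).ncard = 3 := by
    have hsub : G.neighborSet v ∩ G.neighborSet a ⊆ G.neighborSet v \ {a, b} := by
      rintro z ⟨hz, haz⟩
      refine ⟨hz, ?_⟩
      rintro (rfl | rfl)
      exacts [haz.ne rfl, hnab haz]
    have hle := (h3 a ha).trans (Set.ncard_le_ncard hsub)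
    rw [Set.ncard_sdiff (by grind [mem_neighborSet]), Set.ncard_pair hab] at hle ⊢
    omega
  obtain ⟨c, d, e, hcd, hce, hde, hcde⟩ := Set.ncard_eq_three.mp hrest
  have hv : ∀ z ∈ ({c, d, e} : Set V), G.Adj v z := hcde ▸ fun z hz => hz.1
  have hza : ∀ z ∈ ({c, d, e} : Set V), z ≠ a := hcde ▸ fun z hz h => hz.2 (.inl h)
  have hzb : ∀ z ∈ ({c, d, e} : Set V), z ≠ b := hcde ▸ fun z hz h => hz.2 (.inr h)
  have haz : ∀ z ∈ ({c, d, e} : Set V), G.Adj a z := fun z hz =>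
    hmiss ha hb (hv z hz) hab.symm (hza z hz) (hzb z hz).symm hnab
  have hbz : ∀ z ∈ ({c, d, e} : Set V), G.Adj b z := fun z hz =>
    hmiss hb ha (hv z hz) hab (hzb z hz) (hza z hz).symm fun h => hnab h.symm
  by_cases hadj : G.Adj d e
  · exact .completeGraph_of_wheel (v := v) hab hadj (by grind) haz hbz hcd hce
  · have hcd' : G.Adj c d := (hmiss (hv d (by simp)) (hv e (by simp)) (hv c (by simp))
      hde.symm hcd hce.symm hadj).symm
    exact .completeGraph_of_wheel (v := v) (c := e) hab hcd' (by grind) (by grind) (by grind)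
      hce.symm hde.symm

lemma ncard_neighborSet_lt_card {W : Finset V} (hW : G.support ⊆ W) {v : V} (hv : v ∈ W) :
    (G.neighborSet v).ncard < W.card := by
  have hsub : G.neighborSet v ⊆ (W.erase v : Finset V) := fun w hw =>
    Finset.mem_coe.mpr (Finset.mem_erase.mpr ⟨hw.ne', hW ⟨v, hw.symm⟩⟩)
  have hle := Set.ncard_le_ncard hsub
  rw [Set.ncard_coe_finset] at hle
  exact hle.trans_lt (Finset.card_erase_lt_of_mem hv)

lemma ncard_edgeSet_add_six_le {n : ℕ} (hn : 3 ≤ n) {W : Finset V} (hWn : W.card = n)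
    (hW : G.support ⊆ W) (hK : ¬ HasGraphMinor G (completeGraph (Fin 5))) :
    G.edgeSet.ncard + 6 ≤ 3 * n := by
  induction n, hn using Nat.le_induction generalizing W G with
  | base =>
    have hsum := Finset.sum_le_card_nsmul W _ 2 fun v hv =>
      Nat.le_of_lt_succ (hWn ▸ ncard_neighborSet_lt_card hW hv)
    rw [sum_ncard_neighborSet hW, hWn, smul_eq_mul] at hsum
    omega
  | succ n hn ih =>
    by_contra hlt
    obtain ⟨H, hHG, hHn⟩ := exists_le_ncard_edgeSet_eq
      (show 3 * (n + 1) - 5 ≤ G.edgeSet.ncard by omega)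
    replace hW : H.support ⊆ W := (support_mono hHG).trans hW
    replace hK : ¬ HasGraphMinor H (completeGraph (Fin 5)) := fun h => hK (h.mono hHG)
    have hsum := sum_ncard_neighborSet hW
    have hdeg : ∀ v ∈ W, 4 ≤ (H.neighborSet v).ncard := by
      intro v hv
      have hsupp : (H.deleteIncidenceSet v).support ⊆ (W.erase v : Finset V) :=
        (H.support_deleteIncidenceSet_subset v).trans (by grind)
      have hdel := ih (by grind) hsupp fun h => hK (h.mono (H.deleteIncidenceSet_le v))
      have hle := ncard_edgeSet_le_deleteIncidenceSet H v
      omega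
    have htri : ∀ v w, H.Adj v w → 3 ≤ (H.neighborSet v ∩ H.neighborSet w).ncard := by
      intro v w hvw
      have hsupp : (contraction H v w).support ⊆ (W.erase w : Finset V) := by
        rw [Finset.coe_erase]
        exact (support_contraction_subset hvw).trans (Set.sdiff_subset_sdiff_left hW)
      have hw : w ∈ W := hW ⟨v, hvw.symm⟩
      have hcontr := ih (by grind) hsupp
        fun h => hK (h.of_contraction hvw exists_adj_completeGraph)
      have hle := ncard_edgeSet_le_contraction hvw
      omega
    obtain ⟨v, hv, hv5⟩ : ∃ v ∈ W, (H.neighborSet v).ncard ≤ 5 := by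
      by_contra! hcon
      have hle := Finset.card_nsmul_le_sum W _ 6 fun v hv => hcon v hv
      rw [hsum, hWn, hHn, smul_eq_mul] at hle
      omega
    exact hK (.completeGraph_of_three_le_ncard_inter (hdeg v hv) hv5 (htri v))

end EdgeBound

section LowDegree

variable {V : Type*} [Finite V] {G : SimpleGraph V}

/-- A graph all of whose degrees are even. Degrees are counted by `ncard`, so that an infinite
degree counts as even. -/
def IsEvenGraph (G : SimpleGraph V) : Prop := ∀ v, Even (G.neighborSet v).ncard

lemma IsEvenGraph.two_le_ncard_neighborSet (heven : IsEvenGraph G) {v : V} (hv : v ∈ G.support) :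
    2 ≤ (G.neighborSet v).ncard := by
  have hpos : 0 < (G.neighborSet v).ncard := (Set.ncard_pos).mpr hv
  grind [heven v]

lemma IsEvenGraph.three_le_ncard_support (heven : IsEvenGraph G) {v : V} (hv : v ∈ G.support) :
    3 ≤ G.support.ncard := by
  have hsub : insert v (G.neighborSet v) ⊆ G.support :=
    Set.insert_subset hv fun w hw => ⟨v, hw.symm⟩
  have hle := Set.ncard_le_ncard hsub
  rw [Set.ncard_insert_of_notMem (G.notMem_neighborSet_self)] at hle
  exact (Nat.succ_le_succ (heven.two_le_ncard_neighborSet hv)).trans hle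

lemma IsEvenGraph.exists_low_degree_sum_le (heven : IsEvenGraph G) (hp : IsPlanar G)
    (hne : G.support.Nonempty) : ∃ S : Finset V,
      (∀ v ∈ S, v ∈ G.support ∧ (G.neighborSet v).ncard ≤ 4) ∧
      ∑ v ∈ S, (G.neighborSet v).ncard + 12 ≤ 6 * S.card := by
  let W := G.support.toFinite.toFinset
  have hW : G.support ⊆ W := by simp [W]
  have hcardW : 3 ≤ W.card := by
    rw [← Set.ncard_eq_toFinset_card]
    exact heven.three_le_ncard_support hne.some_mem
  have hedge := ncard_edgeSet_add_six_le hcardW rfl hW hp.1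
  have hsum := sum_ncard_neighborSet hW
  refine ⟨W.filter fun v => (G.neighborSet v).ncard ≤ 4, by simp [W], ?_⟩
  have hsplit := Finset.sum_filter_add_sum_filter_not W
    (fun v => (G.neighborSet v).ncard ≤ 4) (fun v => (G.neighborSet v).ncard)
  have hcard := Finset.card_filter_add_card_filter_not (s := W)
    (fun v => (G.neighborSet v).ncard ≤ 4)
  have hhigh := Finset.card_nsmul_le_sum (W.filter fun v => ¬ (G.neighborSet v).ncard ≤ 4)
    (fun v => (G.neighborSet v).ncard) 6 fun v hv => by grind [heven v]
  rw [smul_eq_mul] at hhigh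
  omega

lemma IsEvenGraph.card_eq_three_of_isClique (heven : IsEvenGraph G) (hfree : G.CliqueFree 5)
    {S : Finset V} (hS : G.IsClique (S : Set V))
    (hsum : ∑ v ∈ S, (G.neighborSet v).ncard + 12 ≤ 6 * S.card)
    (h2 : ∀ v ∈ S, 2 ≤ (G.neighborSet v).ncard) :
    S.card = 3 ∧ ∀ v ∈ S, (G.neighborSet v).ncard = 2 := by
  have hS5 : S.card < 5 := by
    by_contra! h5
    exact hfree.mono h5 S ⟨hS, rfl⟩
  have hdeg : ∀ v ∈ S, S.card ≤ (G.neighborSet v).ncard + 1 := by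
    intro v hv
    have hsub : ((S.erase v : Finset V) : Set V) ⊆ G.neighborSet v := fun z hz =>
      have hz := Finset.mem_erase.mp (Finset.mem_coe.mp hz)
      hS hv hz.2 hz.1.symm
    have hle := Set.ncard_le_ncard hsub
    rw [Set.ncard_coe_finset, Finset.card_erase_of_mem hv] at hle
    omega
  have hmin := Finset.card_nsmul_le_sum S _ 2 h2
  rw [smul_eq_mul] at hmin
  have hS4 : S.card ≠ 4 := by
    intro h4
    have hle := Finset.card_nsmul_le_sum S (fun v => (G.neighborSet v).ncard) 4
      fun v hv => by grind [heven v]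
    rw [smul_eq_mul] at hle
    omega
  have hS3 : S.card = 3 := by omega
  refine ⟨hS3, fun v hv => ?_⟩
  by_contra hv2
  have hlt := Finset.sum_lt_sum h2 ⟨v, hv, (h2 v hv).lt_of_ne' hv2⟩
  rw [Finset.sum_const, smul_eq_mul] at hlt
  omega

lemma IsEvenGraph.exists_low_degree (heven : IsEvenGraph G) (hp : IsPlanar G)
    (hne : G.support.Nonempty) :
    (∃ u v, u ≠ v ∧ ¬ G.Adj u v ∧ u ∈ G.support ∧ v ∈ G.support ∧
      (G.neighborSet u).ncard ≤ 4 ∧ (G.neighborSet v).ncard ≤ 4) ∨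
    ∃ a b c, G.Adj a b ∧ G.Adj b c ∧ G.Adj a c ∧ (G.neighborSet a).ncard = 2 ∧
      (G.neighborSet b).ncard = 2 ∧ (G.neighborSet c).ncard = 2 := by
  obtain ⟨S, hS, hsum⟩ := heven.exists_low_degree_sum_le hp hne
  by_cases hclique : G.IsClique (S : Set V)
  · obtain ⟨hS3, hS2⟩ := heven.card_eq_three_of_isClique (cliqueFree_of_not_hasGraphMinor hp.1)
      hclique hsum fun v hv => heven.two_le_ncard_neighborSet (hS v hv).1
    obtain ⟨a, b, c, hab, hac, hbc, rfl⟩ := is3Clique_iff.mp ⟨hclique, hS3⟩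
    exact .inr ⟨a, b, c, hab, hbc, hac, hS2 a (by simp), hS2 b (by simp), hS2 c (by simp)⟩
  · obtain ⟨u, hu, v, hv, huv, hadj⟩ :
        ∃ u, u ∈ S ∧ ∃ v, v ∈ S ∧ u ≠ v ∧ ¬ G.Adj u v := by
      simpa [isClique_iff, Set.Pairwise] using hclique
    exact .inl ⟨u, v, huv, hadj, (hS u hu).1, (hS v hv).1, (hS u hu).2, (hS v hv).2⟩

end LowDegree

section CycleDecompositions

variable {V : Type*} {G : SimpleGraph V} {E E' F : Set (Sym2 V)} {k l : ℕ}

/-- `F` is the edge set of a cycle on the vertex type `V`. The cycle lives in the complete graph,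
so that cycles of different graphs can be compared. -/
def IsCycleEdgeSet (F : Set (Sym2 V)) : Prop :=
  ∃ a, ∃ p : (⊤ : SimpleGraph V).Walk a a, p.IsCycle ∧ p.edgeSet = F

/-- `CycleDecomposable E k`: the edge set `E` is a disjoint union of at most `k` edge sets of
cycles. -/
inductive CycleDecomposable : Set (Sym2 V) → ℕ → Prop
  | nil (k : ℕ) : CycleDecomposable ∅ k
  | cons {F E : Set (Sym2 V)} {k : ℕ} (hF : IsCycleEdgeSet F) (hd : Disjoint F E)
      (h : CycleDecomposable E k) : CycleDecomposable (F ∪ E) (k + 1)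

lemma CycleDecomposable.mono (h : CycleDecomposable E k) (hkl : k ≤ l) :
    CycleDecomposable E l := by
  induction h generalizing l with
  | nil => exact .nil _
  | cons hF hd _ ih =>
    obtain ⟨m, rfl⟩ := Nat.exists_eq_add_of_le' hkl
    exact .cons hF hd (ih (Nat.le_add_left _ m))

lemma CycleDecomposable.union (h : CycleDecomposable E k) (h' : CycleDecomposable E' l)
    (hd : Disjoint E E') : CycleDecomposable (E ∪ E') (k + l) := by
  induction h with
  | nil k => simpa using h'.mono (Nat.le_add_left l k)
  | @cons F E k hF hdF _ ih =>
    rw [Set.disjoint_union_left] at hd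
    rw [Set.union_assoc, Nat.add_right_comm]
    exact .cons hF (Set.disjoint_union_right.mpr ⟨hdF, hd.1⟩) (ih hd.2)

lemma IsCycleEdgeSet.exists_isCycleSubgraph (hF : IsCycleEdgeSet F) (hsub : F ⊆ G.edgeSet) :
    ∃ C : G.Subgraph, IsCycleSubgraph C ∧ C.edgeSet = F := by
  obtain ⟨a, p, hp, rfl⟩ := hF
  have hmem : ∀ e ∈ p.edges, e ∈ G.edgeSet := fun _ he => hsub he
  have hcycle : (p.transfer G hmem).IsCycle := hp.transfer hmem
  refine ⟨(p.transfer G hmem).toSubgraph,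
    ⟨(Walk.toSubgraph_connected _).coe, fun v hv => ?_⟩, ?_⟩
  · exact hcycle.ncard_neighborSet_toSubgraph_eq_two (by simpa using hv)
  · rw [Walk.edgeSet_toSubgraph, Walk.edgeSet_transfer]

lemma CycleDecomposable.exists_finset (h : CycleDecomposable E k) (hsub : E ⊆ G.edgeSet) :
    ∃ 𝒞 : Finset G.Subgraph, (∀ C ∈ 𝒞, IsCycleSubgraph C) ∧
      (∀ C ∈ 𝒞, ∀ C' ∈ 𝒞, C ≠ C' → Disjoint C.edgeSet C'.edgeSet) ∧
      (⋃ C ∈ 𝒞, C.edgeSet) = E ∧ 𝒞.card ≤ k := by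
  induction h with
  | nil => exact ⟨∅, by simp⟩
  | @cons F E k hF hd _ ih =>
    obtain ⟨𝒞, hcycle, hdisj, hunion, hcard⟩ := ih (Set.subset_union_right.trans hsub)
    obtain ⟨C₀, hC₀, rfl⟩ := hF.exists_isCycleSubgraph (Set.subset_union_left.trans hsub)
    have hdisj₀ : ∀ C ∈ 𝒞, Disjoint C₀.edgeSet C.edgeSet := fun C hC => hd.mono_right <|
      hunion ▸ Set.subset_biUnion_of_mem (u := fun C : G.Subgraph => C.edgeSet) hC
    refine ⟨insert C₀ 𝒞, ?_, ?_, by rw [Finset.set_biUnion_insert, hunion],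
      (Finset.card_insert_le _ _).trans (Nat.succ_le_succ hcard)⟩
    · simpa using ⟨hC₀, hcycle⟩
    · simp only [Finset.mem_insert]
      rintro C (rfl | hC) C' (rfl | hC') hne
      exacts [absurd rfl hne, hdisj₀ C' hC', (hdisj₀ C hC).symm, hdisj C hC C' hC' hne]

lemma edgeSet_eq_insert_tail_of_isCycle {c : V} {p : G.Walk c c} (hp : p.IsCycle) :
    p.tail.IsPath ∧ s(c, p.snd) ∉ p.tail.edgeSet ∧
      p.edgeSet = insert s(c, p.snd) p.tail.edgeSet := by
  have hcons := p.cons_tail_eq hp.not_nil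
  have hp' := hp
  rw [← hcons, Walk.cons_isCycle_iff] at hp'
  exact ⟨hp'.1, hp'.2, by rw [← Walk.edgeSet_cons (p.adj_snd hp.not_nil), hcons]⟩

lemma exists_isPath_of_mem_edges_isCycle {a c d : V} {p : G.Walk a a} (hp : p.IsCycle)
    (hcd : s(c, d) ∈ p.edges) : ∃ q : G.Walk d c, q.IsPath ∧ s(c, d) ∉ q.edgeSet ∧
      p.edgeSet = insert s(c, d) q.edgeSet := by
  have hc : c ∈ p.support := p.fst_mem_support_of_mem_edges hcd
  obtain ⟨r, hr, rfl, hedges⟩ : ∃ r : G.Walk c c, r.IsCycle ∧ r.snd = d ∧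
      r.edgeSet = p.edgeSet := by
    have hrot := hp.rotate hc
    have hedges : (p.rotate c hc).edgeSet = p.edgeSet := by
      ext e
      exact (p.rotate_edges c hc).perm.mem_iff
    have hd : d ∈ (p.rotate c hc).toSubgraph.neighborSet c := by
      rwa [Subgraph.mem_neighborSet, ← Subgraph.mem_edgeSet, Walk.edgeSet_toSubgraph, hedges]
    rw [hrot.neighborSet_toSubgraph_endpoint] at hd
    rcases hd with hd | hd
    · exact ⟨_, hrot, hd.symm, hedges⟩
    · exact ⟨_, hrot.reverse, by rw [Walk.snd_reverse, hd], by rwa [Walk.edgeSet_reverse]⟩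
  obtain ⟨hpath, hnot, hinsert⟩ := edgeSet_eq_insert_tail_of_isCycle hr
  exact ⟨r.tail, hpath, hnot, hedges ▸ hinsert⟩

lemma isCycleEdgeSet_triangle {a b c : V} (hab : a ≠ b) (hbc : b ≠ c) (hca : c ≠ a) :
    IsCycleEdgeSet {s(a, b), s(b, c), s(c, a)} := by
  refine ⟨a, .cons hab (.cons hbc (.cons hca .nil)), ?_, by simp⟩
  rw [Walk.cons_isCycle_iff]
  grind [Walk.cons_isPath_iff, Walk.IsPath.nil, Walk.support_cons, Walk.support_nil,
    Walk.edges_cons, Walk.edges_nil]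

lemma IsCycleEdgeSet.subdivide (h : IsCycleEdgeSet F) {c d u : V} (hu : ∀ e ∈ F, u ∉ e)
    (hcd : s(c, d) ∈ F) : IsCycleEdgeSet ((F \ {s(c, d)}) ∪ {s(c, u), s(u, d)}) := by
  obtain ⟨a, p, hp, rfl⟩ := h
  obtain ⟨q, hq, hcdq, hpq⟩ := exists_isPath_of_mem_edges_isCycle hp hcd
  have hne : c ≠ d := (p.adj_of_mem_edges hcd).ne
  have huq : u ∉ q.support := by
    intro h
    obtain ⟨e, he, hue⟩ := (Walk.mem_support_iff_exists_mem_edges_of_not_nil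
      fun hn => hne hn.eq.symm).mp h
    exact hu e (hpq ▸ .inr he) hue
  have huc : u ≠ c := fun h => huq (h ▸ q.end_mem_support)
  have hud : u ≠ d := fun h => huq (h ▸ q.start_mem_support)
  refine ⟨c, .cons huc.symm (.cons hud q), ?_, ?_⟩
  · rw [Walk.cons_isCycle_iff, Walk.cons_isPath_iff, Walk.edges_cons, List.mem_cons, not_or]
    exact ⟨⟨hq, huq⟩, by simp [huc.symm, hne], fun h => huq (q.snd_mem_support_of_mem_edges h)⟩
  · rw [hpq, Set.insert_sdiff_self_of_notMem hcdq, Walk.edgeSet_cons, Walk.edgeSet_cons]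
    grind

lemma CycleDecomposable.subdivide (h : CycleDecomposable E k) {c d u : V}
    (hu : ∀ e ∈ E, u ∉ e) (hcd : s(c, d) ∈ E) :
    CycleDecomposable ((E \ {s(c, d)}) ∪ {s(c, u), s(u, d)}) k := by
  induction h with
  | nil => exact absurd hcd (Set.notMem_empty _)
  | @cons F E k hF hd h ih =>
    have hnew : ∀ A : Set (Sym2 V), (∀ e ∈ A, u ∉ e) → Disjoint A {s(c, u), s(u, d)} := by
      intro A hA
      rw [Set.disjoint_left]
      rintro _ he (rfl | rfl)
      exacts [hA _ he (by simp), hA _ he (by simp)]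
    have huF := fun e he => hu e (.inl he)
    have huE := fun e he => hu e (.inr he)
    rcases hcd with hcd | hcd
    · have hcdE : s(c, d) ∉ E := Set.disjoint_left.mp hd hcd
      convert CycleDecomposable.cons (hF.subdivide huF hcd)
        (Set.disjoint_union_left.mpr ⟨hd.mono_left Set.sdiff_subset, (hnew E huE).symm⟩) h using 1
      grind
    · have hcdF : s(c, d) ∉ F := Set.disjoint_right.mp hd hcd
      convert CycleDecomposable.cons hF
        (Set.disjoint_union_right.mpr ⟨hd.mono_right Set.sdiff_subset, hnew F huF⟩)
        (ih huE hcd) using 1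
      grind

lemma IsCycleEdgeSet.even_ncard (h : IsCycleEdgeSet F) (v : V) :
    Even {w | s(v, w) ∈ F}.ncard := by
  obtain ⟨a, p, hp, rfl⟩ := h
  have hnbr : {w | s(v, w) ∈ p.edgeSet} = p.toSubgraph.neighborSet v := by
    ext w
    rw [Subgraph.mem_neighborSet, ← Subgraph.mem_edgeSet, Walk.edgeSet_toSubgraph,
      Set.mem_ofPred_eq]
  rw [hnbr]
  by_cases hv : v ∈ p.support
  · exact hp.ncard_neighborSet_toSubgraph_eq_two hv ▸ even_two
  · have hempty : p.toSubgraph.neighborSet v = ∅ := by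
      by_contra! hne
      obtain ⟨w, hw⟩ := hne
      exact hv (p.mem_verts_toSubgraph.mp (p.toSubgraph.edge_vert hw))
    simp [hempty]

end CycleDecompositions

section Parity

variable {V : Type*} [Finite V] {G H : SimpleGraph V} {F : Set (Sym2 V)}

lemma even_ncard_symmDiff {s t : Set V} :
    Even (symmDiff s t).ncard ↔ (Even s.ncard ↔ Even t.ncard) := by
  have hs := Set.ncard_inter_add_ncard_sdiff_eq_ncard s t
  have ht := Set.ncard_inter_add_ncard_sdiff_eq_ncard t s
  rw [Set.symmDiff_def, Set.ncard_union_eq disjoint_sdiff_sdiff, ← hs, ← ht, Set.inter_comm t s]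
  grind

lemma IsEvenGraph.of_edgeSet_eq_symmDiff (heven : IsEvenGraph G) (hF : IsCycleEdgeSet F)
    (h : H.edgeSet = symmDiff G.edgeSet F) : IsEvenGraph H := by
  intro v
  have hnbr : H.neighborSet v = symmDiff (G.neighborSet v) {w | s(v, w) ∈ F} :=
    Set.ext fun w => Set.ext_iff.mp h s(v, w)
  rw [hnbr, even_ncard_symmDiff]
  exact iff_of_true (heven v) (hF.even_ncard v)

lemma IsEvenGraph.deleteEdges (heven : IsEvenGraph G) (hF : IsCycleEdgeSet F)
    (hFG : F ⊆ G.edgeSet) : IsEvenGraph (G.deleteEdges F) :=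
  heven.of_edgeSet_eq_symmDiff hF (by
    rw [edgeSet_deleteEdges, symmDiff_of_ge hFG])

end Parity

section Suppression

variable {V : Type*} {G : SimpleGraph V} {u : V} {k : ℕ}

/-- The suppression of the vertex `u`: its neighbours are joined to each other, and `u` becomes
isolated. It is only used for a `Suppressible` vertex, where at most one edge is added. -/
def suppress (G : SimpleGraph V) (u : V) : SimpleGraph V where
  Adj a b := a ≠ b ∧ a ≠ u ∧ b ≠ u ∧ (G.Adj a b ∨ (G.Adj u a ∧ G.Adj u b))
  symm := ⟨fun _ _ ⟨hab, ha, hb, h⟩ => ⟨hab.symm, hb, ha, h.imp .symm .symm⟩⟩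
  loopless := ⟨fun _ h => h.1 rfl⟩

/-- `u` can be suppressed without creating a multiple edge: it is isolated, or it has exactly two
neighbours and these are nonadjacent. -/
def Suppressible (G : SimpleGraph V) (u : V) : Prop :=
  G.neighborSet u = ∅ ∨ ∃ c d, c ≠ d ∧ ¬ G.Adj c d ∧ G.neighborSet u = {c, d}

lemma suppress_eq_self (h : G.neighborSet u = ∅) : suppress G u = G := by
  have hu : ∀ w, ¬ G.Adj u w := Set.eq_empty_iff_forall_notMem.mp h
  ext a b
  refine ⟨fun hab => hab.2.2.2.resolve_right fun h => hu _ h.1,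
    fun hab => ⟨hab.ne, ?_, ?_, .inl hab⟩⟩
  · rintro rfl
    exact hu _ hab
  · rintro rfl
    exact hu _ hab.symm

lemma edgeSet_suppress {c d : V} (hcd : c ≠ d) (hN : G.neighborSet u = {c, d}) :
    (suppress G u).edgeSet = insert s(c, d) (G.edgeSet \ {s(c, u), s(u, d)}) := by
  have hu : ∀ w, G.Adj u w ↔ w = c ∨ w = d := Set.ext_iff.mp hN
  ext e
  induction e with | _ a b
  have ha := G.adj_comm u a
  have hb := G.adj_comm u b
  simp only [suppress, Set.mem_insert_iff, Set.mem_sdiff, Set.mem_singleton_iff, mem_edgeSet,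
    Sym2.eq_iff]
  grind [Adj.ne]

lemma suppress_le_contraction {c d : V} (hN : G.neighborSet u = {c, d}) :
    suppress G u ≤ contraction G c u := by
  have hu : ∀ w, G.Adj u w ↔ w = c ∨ w = d := Set.ext_iff.mp hN
  have huc : G.Adj u c := (hu c).mpr (.inl rfl)
  rintro a b ⟨hab, ha, hb, h⟩
  rw [contraction_adj huc.ne']
  grind

lemma IsPlanar.suppress (hp : IsPlanar G) (h : Suppressible G u) : IsPlanar (suppress G u) := by
  rcases h with h | ⟨c, d, -, -, hN⟩
  · rwa [suppress_eq_self h]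
  · have huc : c ∈ G.neighborSet u := hN ▸ .inl rfl
    exact (hp.contraction (Adj.symm huc)).mono (suppress_le_contraction hN)

lemma IsEvenGraph.suppress [Finite V] (heven : IsEvenGraph G) (h : Suppressible G u) :
    IsEvenGraph (suppress G u) := by
  rcases h with h | ⟨c, d, hcd, hn, hN⟩
  · rwa [suppress_eq_self h]
  have huc : G.Adj u c := (hN ▸ .inl rfl : c ∈ G.neighborSet u)
  have hud : G.Adj u d := (hN ▸ .inr rfl : d ∈ G.neighborSet u)
  refine heven.of_edgeSet_eq_symmDiff (isCycleEdgeSet_triangle huc.ne' hud.ne hcd.symm) ?_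
  rw [edgeSet_suppress hcd hN, Sym2.eq_swap (a := d)]
  grind [mem_edgeSet, Sym2.eq_swap, Adj.symm]

lemma support_suppress_subset : (suppress G u).support ⊆ G.support \ {u} := by
  rintro a ⟨b, -, ha, -, h | h⟩
  exacts [⟨⟨b, h⟩, ha⟩, ⟨⟨u, h.1.symm⟩, ha⟩]

lemma CycleDecomposable.of_suppress (h : Suppressible G u)
    (hk : CycleDecomposable (suppress G u).edgeSet k) : CycleDecomposable G.edgeSet k := by
  rcases h with h | ⟨c, d, hcd, hn, hN⟩
  · rwa [suppress_eq_self h] at hk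
  have huc : G.Adj u c := (hN ▸ .inl rfl : c ∈ G.neighborSet u)
  have hud : G.Adj u d := (hN ▸ .inr rfl : d ∈ G.neighborSet u)
  rw [edgeSet_suppress hcd hN] at hk
  convert hk.subdivide (c := c) (d := d) (u := u) ?_ (.inl rfl) using 1
  · grind [mem_edgeSet, Sym2.eq_swap, Adj.symm]
  · rintro e (rfl | ⟨he, hne⟩) hue
    · grind [Adj.ne]
    · obtain ⟨w, rfl⟩ := Sym2.mem_iff_exists.mp hue
      have hw : w ∈ G.neighborSet u := he
      grind [Sym2.eq_swap]

end Suppression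

section Reduction

variable {V : Type*} {G : SimpleGraph V} {u v : V}

/-- The bound of Hajós' conjecture for `G`. Isolated vertices do not count, so that the vertex type
can stay fixed while `G` shrinks. -/
def SatisfiesHajos (G : SimpleGraph V) : Prop :=
  CycleDecomposable G.edgeSet ((G.support.ncard - 1) / 2)

/-- The induction hypothesis: the bound of Hajós' conjecture holds for all planar even graphs on
the vertex type `V` with fewer than `s` non-isolated vertices. -/
def HajosBelow (V : Type*) (s : ℕ) : Prop :=
  ∀ H : SimpleGraph V, IsPlanar H → IsEvenGraph H → H.support.ncard < s → SatisfiesHajos H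

/-- `u` and `v` can be suppressed one after the other. The last condition excludes that suppressing
`u` joins the two neighbours of `v`. -/
structure SuppressiblePair (G : SimpleGraph V) (u v : V) : Prop where
  ne : u ≠ v
  not_adj : ¬ G.Adj u v
  left : Suppressible G u
  right : Suppressible G v
  eq_empty_of_eq : G.neighborSet u = G.neighborSet v → G.neighborSet u = ∅

lemma neighborSet_suppress (hne : u ≠ v) (hadj : ¬ G.Adj u v) :
    (suppress G u).neighborSet v = G.neighborSet v := by
  ext w
  refine ⟨fun h => h.2.2.2.resolve_right fun h' => hadj h'.1, fun h => ⟨h.ne, hne.symm, ?_, .inl h⟩⟩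
  rintro rfl
  exact hadj h.symm

lemma SuppressiblePair.suppressible_suppress (h : SuppressiblePair G u v) :
    Suppressible (suppress G u) v := by
  rw [Suppressible, neighborSet_suppress h.ne h.not_adj]
  refine h.right.imp_right ?_
  rintro ⟨c, d, hcd, hn, hN⟩
  refine ⟨c, d, hcd, ?_, hN⟩
  rintro ⟨-, -, -, hadj | ⟨huc, hud⟩⟩
  · exact hn hadj
  have hNu : G.neighborSet u = {c, d} := by
    rcases h.left with h₀ | ⟨c', d', -, -, hN'⟩
    · exact absurd huc (Set.eq_empty_iff_forall_notMem.mp h₀ c)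
    · have hc : c ∈ G.neighborSet u := huc
      have hd : d ∈ G.neighborSet u := hud
      grind
  have hempty := h.eq_empty_of_eq (hNu.trans hN.symm)
  exact Set.eq_empty_iff_forall_notMem.mp hempty c huc

theorem satisfiesHajos_of_deleteEdges [Finite V] (hp : IsPlanar G) (heven : IsEvenGraph G)
    (ih : HajosBelow V G.support.ncard) {F : Set (Sym2 V)} (hF : IsCycleEdgeSet F)
    (hFG : F ⊆ G.edgeSet) (hu : u ∈ G.support) (hv : v ∈ G.support)
    (h : SuppressiblePair (G.deleteEdges F) u v) : SatisfiesHajos G := by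
  have hle : G.deleteEdges F ≤ G := deleteEdges_le _
  have hright := h.suppressible_suppress
  set H := suppress (suppress (G.deleteEdges F) u) v
  have hsupport : H.support ⊆ G.support \ {u, v} := by
    intro z hz
    have hzv := support_suppress_subset hz
    have hzu := support_suppress_subset hzv.1
    exact ⟨support_mono hle hzu.1, by grind⟩
  have hcard : H.support.ncard ≤ G.support.ncard - 2 := by
    rw [← Set.ncard_pair h.ne, ← Set.ncard_sdiff (Set.pair_subset hu hv)]
    exact Set.ncard_le_ncard hsupport
  have hthree : 3 ≤ G.support.ncard := heven.three_le_ncard_support hu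
  have hdec : CycleDecomposable (G.deleteEdges F).edgeSet ((H.support.ncard - 1) / 2) :=
    .of_suppress h.left <| .of_suppress hright <|
      ih H (((hp.mono hle).suppress h.left).suppress hright)
        (((heven.deleteEdges hF hFG).suppress h.left).suppress hright) (by omega)
  rw [edgeSet_deleteEdges] at hdec
  have hcons := CycleDecomposable.cons hF disjoint_sdiff_self_right hdec
  rw [Set.union_sdiff_cancel hFG] at hcons
  exact hcons.mono (by omega)

end Reduction

section CutVertices

variable {V : Type*} {G : SimpleGraph V}

/-- No vertex separates two other non-isolated vertices; in particular, the non-isolated vertices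
are connected to each other. -/
def NoCutVertex (G : SimpleGraph V) : Prop :=
  ∀ x a b, a ∈ G.support → b ∈ G.support → a ≠ x → b ≠ x → ∃ p : G.Walk a b, x ∉ p.support

lemma IsEvenGraph.of_forall_ne [Finite V] {x : V}
    (h : ∀ z ≠ x, Even (G.neighborSet z).ncard) : IsEvenGraph G := by
  have := Fintype.ofFinite V
  intro z
  obtain rfl | hz := eq_or_ne z x
  · have hsum := sum_ncard_neighborSet (G := G) (W := Finset.univ) (by simp)
    rw [← Finset.add_sum_erase _ _ (Finset.mem_univ z)] at hsum
    have hrest : Even (∑ y ∈ Finset.univ.erase z, (G.neighborSet y).ncard) :=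
      Finset.even_sum _ fun y hy => h y (Finset.ne_of_mem_erase hy)
    exact (Nat.even_add.mp (hsum ▸ even_two_mul _)).mpr hrest
  · exact h z hz

lemma IsEvenGraph.sdiff [Finite V] {H : SimpleGraph V} (hG : IsEvenGraph G) (hH : IsEvenGraph H)
    (hle : H ≤ G) : IsEvenGraph (G \ H) := by
  intro z
  have hsub : H.neighborSet z ⊆ G.neighborSet z := fun w hw => hle hw
  have hnbr : (G \ H).neighborSet z = G.neighborSet z \ H.neighborSet z := rfl
  rw [hnbr, Set.ncard_sdiff hsub, Nat.even_sub (Set.ncard_le_ncard hsub)]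
  exact iff_of_true (hG z) (hH z)

lemma satisfiesHajos_of_le [Finite V] {H : SimpleGraph V} {a b x : V} (hp : IsPlanar G)
    (heven : IsEvenGraph G) (ih : HajosBelow V G.support.ncard) (hle : H ≤ G)
    (hH : IsEvenGraph H) (ha : a ∈ G.support \ (G \ H).support) (hb : b ∈ G.support \ H.support)
    (hx : H.support ∩ (G \ H).support ⊆ {x}) : SatisfiesHajos G := by
  have hsup : H.support ⊆ G.support := support_mono hle
  have hsup' : (G \ H).support ⊆ G.support := support_mono sdiff_le
  have hlt : H.support.ncard < G.support.ncard :=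
    Set.ncard_lt_ncard ⟨hsup, fun h => hb.2 (h hb.1)⟩
  have hlt' : (G \ H).support.ncard < G.support.ncard :=
    Set.ncard_lt_ncard ⟨hsup', fun h => ha.2 (h ha.1)⟩
  have hinter : (H.support ∩ (G \ H).support).ncard ≤ 1 := by
    simpa using Set.ncard_le_ncard hx
  have hunion := Set.ncard_le_ncard (Set.union_subset hsup hsup')
  have hadd := Set.ncard_union_add_ncard_inter H.support (G \ H).support
  have hdec := (ih H (hp.mono hle) hH hlt).union
    (ih (G \ H) (hp.mono sdiff_le) (heven.sdiff hH hle) hlt')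
    (by rw [edgeSet_sdiff]; exact disjoint_sdiff_self_right)
  rw [edgeSet_sdiff, Set.union_sdiff_cancel (edgeSet_mono hle)] at hdec
  exact hdec.mono (by omega)

theorem satisfiesHajos_of_not_noCutVertex [Finite V] (hp : IsPlanar G) (heven : IsEvenGraph G)
    (ih : HajosBelow V G.support.ncard) (hcut : ¬ NoCutVertex G) : SatisfiesHajos G := by
  unfold NoCutVertex at hcut
  push Not at hcut
  obtain ⟨x, a, b, ha, hb, hax, hbx, hab⟩ := hcut
  let A : Set V := {z | ∃ p : G.Walk a z, x ∉ p.support}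
  have haA : a ∈ A := ⟨.nil, by simpa using hax.symm⟩
  have hbA : b ∉ A := fun ⟨p, h⟩ => h (hab p)
  have hstep : ∀ z w, z ∈ A → G.Adj z w → w = x ∨ w ∈ A := by
    rintro z w ⟨p, hp⟩ hzw
    refine or_iff_not_imp_left.mpr fun hw => ⟨p.concat hzw, ?_⟩
    simpa [Walk.support_concat, hp] using Ne.symm hw
  have hadj : ∀ z w, (G.between A Set.univ).Adj z w ↔ G.Adj z w ∧ (z ∈ A ∨ w ∈ A) := by
    simp [between_adj]
  have hsupport : (G.between A Set.univ).support ⊆ insert x A := by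
    rintro z ⟨w, hw⟩
    obtain ⟨hzw, hz | hw⟩ := (hadj z w).mp hw
    exacts [.inr hz, hstep w z hw hzw.symm]
  have hsupport' : (G \ G.between A Set.univ).support ⊆ Aᶜ := by
    rintro z ⟨w, hzw, hw⟩ hz
    exact hw ((hadj z w).mpr ⟨hzw, .inl hz⟩)
  have heven' : IsEvenGraph (G.between A Set.univ) := .of_forall_ne (x := x) fun z hzx => by
    by_cases hz : z ∈ A
    · convert heven z using 2
      ext w
      exact (hadj z w).trans (and_iff_left (.inl hz))
    · have hempty : (G.between A Set.univ).neighborSet z = ∅ :=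
        Set.eq_empty_iff_forall_notMem.mpr fun w hw => (hsupport ⟨w, hw⟩).elim hzx hz
      simp [hempty]
  refine satisfiesHajos_of_le hp heven ih between_le heven' (a := a) (b := b) (x := x)
    ⟨ha, fun h => hsupport' h haA⟩ ⟨hb, fun h => (hsupport h).elim hbx hbA⟩ fun z hz => ?_
  exact (hsupport hz.1).resolve_right (hsupport' hz.2)

end CutVertices

section Paths

variable {V : Type*} {G : SimpleGraph V} {a b c z : V} {p : G.Walk a b} {q : G.Walk b c}

lemma isPath_append (hp : p.IsPath) (hq : q.IsPath)
    (h : ∀ z ∈ p.support, z ∈ q.support → z = b) : (p.append q).IsPath := by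
  rw [Walk.isPath_def, Walk.support_append, List.nodup_append]
  have hq' := hq.support_nodup
  rw [← q.cons_tail_support, List.nodup_cons] at hq'
  refine ⟨hp.support_nodup, hq'.2, ?_⟩
  rintro z hz _ hz' rfl
  exact hq'.1 (h z hz (List.mem_of_mem_tail hz') ▸ hz')

lemma eq_of_isPath_append (h : (p.append q).IsPath) (hp : z ∈ p.support) (hq : z ∈ q.support) :
    z = b :=
  by_contra fun hne => h.ne_of_mem_support_of_append hne hp hq rfl

lemma penultimate_append_of_ne (p : G.Walk a b) (q : G.Walk b c) (hbc : b ≠ c) :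
    (p.append q).penultimate = q.penultimate := by
  induction p with
  | nil => rfl
  | cons h p ih =>
    rw [Walk.cons_append, Walk.penultimate_cons_of_not_nil _ _ ?_, ih q hbc]
    exact fun hn => hbc (Walk.nil_append_iff.mp hn).2.eq

lemma exists_isPath_first_mem (p : G.Walk a b) {S : Set V} (hb : b ∈ S) :
    ∃ y ∈ S, ∃ q : G.Walk a y, q.IsPath ∧ q.support ⊆ p.support ∧
      ∀ z ∈ q.support, z ∈ S → z = y := by
  obtain ⟨y, hyS, hy, hfirst⟩ := p.exists_mem_support_forall_mem_support_imp_eq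
    (p.support.toFinset.filter (· ∈ S)) ⟨b, by simpa using hb⟩
  have hsub := (p.takeUntil y hy).support_bypass_subset_support
  have hsub' := p.support_takeUntil_subset_support hy
  refine ⟨y, (Finset.mem_filter.mp hyS).2, (p.takeUntil y hy).bypass, Walk.bypass_isPath _,
    fun z hz => hsub' (hsub hz), fun z hz hzS => hfirst z ?_ (hsub hz)⟩
  simpa using ⟨hsub' (hsub hz), hzS⟩

lemma snd_mem_support (p : G.Walk a b) : p.snd ∈ p.support :=
  p.getVert_mem_support 1

lemma adj_snd_of_ne (hne : a ≠ b) (p : G.Walk a b) : G.Adj a p.snd :=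
  p.adj_snd fun hn => hne hn.eq

end Paths

section Links

variable {V : Type*} {G : SimpleGraph V} {u v w x y c z : V}

/-- A link from `u` to `v`: two paths from `u` to `v` without common inner vertices. If `u` and `v`
are nonadjacent, they form a cycle through `u` and `v`. -/
structure Link (G : SimpleGraph V) (u v : V) where
  left : G.Walk u v
  right : G.Walk u v
  isPath_left : left.IsPath
  isPath_right : right.IsPath
  eq_or_eq : ∀ z ∈ left.support, z ∈ right.support → z = u ∨ z = v

namespace Link

/-- The link with its two paths exchanged. -/
def swap (L : Link G u v) : Link G u v :=
  ⟨L.right, L.left, L.isPath_right, L.isPath_left, fun z hr hl => L.eq_or_eq z hl hr⟩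

/-- The link with its two paths reversed. Statements about a link at `v` are stated as statements
about the reversed link at its first vertex. -/
def reverse (L : Link G u v) : Link G v u where
  left := L.left.reverse
  right := L.right.reverse
  isPath_left := L.isPath_left.reverse
  isPath_right := L.isPath_right.reverse
  eq_or_eq z hl hr := (L.eq_or_eq z (by simpa using hl) (by simpa using hr)).symm

/-- The vertices of a link. -/
def verts (L : Link G u v) : Set V :=
  {z | z ∈ L.left.support ∨ z ∈ L.right.support}

/-- The edges of a link. -/
def edges (L : Link G u v) : Set (Sym2 V) :=
  L.left.edgeSet ∪ L.right.edgeSet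

/-- The total length of the two paths of a link. -/
def length (L : Link G u v) : ℕ :=
  L.left.length + L.right.length

/-- The two vertices that follow `u` on a link from `u` to `v`. -/
def ends (L : Link G u v) : Set V :=
  {L.left.snd, L.right.snd}

/-- The neighbours of `u` that are not joined to `u` by an edge of a link from `u` to `v`. -/
def rest (L : Link G u v) : Set V :=
  G.neighborSet u \ L.ends

@[simp] lemma reverse_reverse (L : Link G u v) : L.reverse.reverse = L := by
  simp [reverse]

@[simp] lemma verts_swap (L : Link G u v) : L.swap.verts = L.verts :=
  Set.ext fun _ => or_comm

@[simp] lemma verts_reverse (L : Link G u v) : L.reverse.verts = L.verts := by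
  simp [verts, reverse]

@[simp] lemma edges_swap (L : Link G u v) : L.swap.edges = L.edges :=
  Set.union_comm _ _

@[simp] lemma edges_reverse (L : Link G u v) : L.reverse.edges = L.edges := by
  simp [edges, reverse]

@[simp] lemma length_swap (L : Link G u v) : L.swap.length = L.length :=
  Nat.add_comm _ _

@[simp] lemma length_reverse (L : Link G u v) : L.reverse.length = L.length := by
  simp [length, reverse]

@[simp] lemma ends_swap (L : Link G u v) : L.swap.ends = L.ends :=
  Set.pair_comm _ _

@[simp] lemma rest_swap (L : Link G u v) : L.swap.rest = L.rest := by
  simp [rest]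

lemma ends_reverse (L : Link G u v) :
    L.reverse.ends = {L.left.penultimate, L.right.penultimate} := by
  simp [ends, reverse]

@[simp] lemma reverse_swap (L : Link G u v) : L.swap.reverse = L.reverse.swap :=
  rfl

lemma snd_ne (L : Link G u v) (hne : u ≠ v) (hadj : ¬ G.Adj u v) : L.left.snd ≠ L.right.snd := by
  intro h
  have huL := adj_snd_of_ne hne L.left
  rcases L.eq_or_eq _ (snd_mem_support _) (h ▸ snd_mem_support _) with h' | h'
  · exact huL.ne h'.symm
  · exact hadj (h' ▸ huL)

/-- The link obtained by replacing the initial segment `P₁` of the left path, from `u` to `y`, by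
the edge `uc` and a path `R` from `c` to `y` that avoids the rest of the link. -/
def detour (L : Link G u v) {P₁ : G.Walk u y} {P₂ : G.Walk y v} (hL : L.left = P₁.append P₂)
    (huc : G.Adj u c) {R : G.Walk c y} (hR : R.IsPath) (huR : u ∉ R.support)
    (hmeet : ∀ z ∈ R.support, z ∈ L.verts → z = y) : Link G u v where
  left := .cons huc (R.append P₂)
  right := L.right
  isPath_left := by
    have hpath := hL ▸ L.isPath_left
    have hsub : P₂.support ⊆ L.left.support := hL ▸ Walk.support_subset_support_append_right _ _
    rw [Walk.cons_isPath_iff, Walk.mem_support_append_iff, not_or]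
    refine ⟨isPath_append hR hpath.of_append_right fun z hz hz' => hmeet z hz (.inl (hsub hz')),
      huR, fun hu => huR ?_⟩
    exact eq_of_isPath_append hpath P₁.start_mem_support hu ▸ R.end_mem_support
  isPath_right := L.isPath_right
  eq_or_eq z hl hr := by
    have hy : y ∈ L.left.support :=
      hL ▸ Walk.support_subset_support_append_left _ _ P₁.end_mem_support
    rw [Walk.support_cons, List.mem_cons, Walk.mem_support_append_iff] at hl
    rcases hl with hl | hl | hl
    · exact .inl hl
    · exact L.eq_or_eq z (hmeet z hl (.inr hr) ▸ hy) hr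
    · exact L.eq_or_eq z (hL ▸ Walk.support_subset_support_append_right _ _ hl) hr

end Link

lemma nonempty_link_of_mem_left (L : Link G x v) (hw : w ∈ L.left.support) (hwv : w ≠ v) :
    Nonempty (Link G w v) := by
  obtain ⟨P₁, P₂, h₁, h₂, hL⟩ := L.isPath_left.mem_support_iff_exists_append.mp hw
  have hpath := hL ▸ L.isPath_left
  have hmem : ∀ z, z ∈ P₁.support ∨ z ∈ P₂.support → z ∈ L.left.support := fun z hz => by
    rwa [hL, Walk.mem_support_append_iff]
  refine ⟨⟨P₂, P₁.reverse.append L.right, h₂, isPath_append h₁.reverse L.isPath_right ?_, ?_⟩⟩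
  · intro z hz hr
    rw [Walk.support_reverse, List.mem_reverse] at hz
    refine (L.eq_or_eq z (hmem z (.inl hz)) hr).resolve_right ?_
    rintro rfl
    exact hwv (eq_of_isPath_append hpath hz P₂.end_mem_support).symm
  · intro z hz hz'
    rw [Walk.mem_support_append_iff, Walk.support_reverse, List.mem_reverse] at hz'
    rcases hz' with hz' | hz'
    · exact .inl (eq_of_isPath_append hpath hz' hz)
    · refine (L.eq_or_eq z (hmem z (.inr hz)) hz').imp_left ?_
      rintro rfl
      exact eq_of_isPath_append hpath P₁.start_mem_support hz

lemma nonempty_link_of_isPath (L : Link G x v) (hwx : G.Adj w x) (hw : w ∉ L.verts)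
    (hy : y ∈ L.left.support) {R : G.Walk w y} (hR : R.IsPath) (hxR : x ∉ R.support)
    (hmeet : ∀ z ∈ R.support, z ∈ L.verts → z = y) : Nonempty (Link G w v) := by
  obtain ⟨P₁, P₂, -, h₂, hL⟩ := L.isPath_left.mem_support_iff_exists_append.mp hy
  have hpath := hL ▸ L.isPath_left
  have hP₂ : P₂.support ⊆ L.left.support := hL ▸ Walk.support_subset_support_append_right _ _
  refine ⟨⟨R.append P₂, .cons hwx L.right,
    isPath_append hR h₂ fun z hz hz' => hmeet z hz (.inl (hP₂ hz')),
    (Walk.cons_isPath_iff _ _).mpr ⟨L.isPath_right, fun h => hw (.inr h)⟩, ?_⟩⟩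
  intro z hz hz'
  rw [Walk.support_cons, List.mem_cons] at hz'
  refine hz'.imp_right fun hr => ?_
  rw [Walk.mem_support_append_iff] at hz
  have hz₂ : z ∈ P₂.support :=
    hz.elim (fun h => hmeet z h (.inr hr) ▸ P₂.start_mem_support) id
  refine (L.eq_or_eq z (hP₂ hz₂) hr).resolve_left ?_
  rintro rfl
  exact hxR (eq_of_isPath_append hpath P₁.start_mem_support hz₂ ▸ R.end_mem_support)

-- Whitney's argument: the link of the last vertex of the walk is one edge taken twice, and links
-- are then pushed backwards along the walk.
lemma NoCutVertex.nonempty_link_of_walk (hcut : NoCutVertex G) (r : G.Walk w x)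
    (hr : v ∉ r.support) (hxv : G.Adj x v) : Nonempty (Link G w v) := by
  induction r with
  | nil => exact ⟨⟨.cons hxv .nil, .cons hxv .nil, by simpa using hxv.ne, by simpa using hxv.ne,
      fun z hz _ => by simpa using hz⟩⟩
  | @cons w x x₀ hwx r ih =>
    rw [Walk.support_cons, List.mem_cons, not_or] at hr
    obtain ⟨L⟩ := ih hr.2 hxv
    have hvx : v ≠ x := fun h => hr.2 (h ▸ r.start_mem_support)
    by_cases hw : w ∈ L.verts
    · rcases hw with hw | hw
      · exact nonempty_link_of_mem_left L hw (Ne.symm hr.1)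
      · exact nonempty_link_of_mem_left L.swap hw (Ne.symm hr.1)
    obtain ⟨R₀, hR₀⟩ := hcut x w v ⟨x, hwx⟩ ⟨x₀, hxv.symm⟩ hwx.ne hvx
    obtain ⟨y, hy, R, hR, hsub, hmeet⟩ :=
      exists_isPath_first_mem R₀ (S := L.verts) (.inl L.left.end_mem_support)
    have hxR : x ∉ R.support := fun h => hR₀ (hsub h)
    rcases hy with hy | hy
    · exact nonempty_link_of_isPath L hwx hw hy hR hxR hmeet
    · exact nonempty_link_of_isPath L.swap hwx (by simpa using hw) hy hR hxR (by simpa using hmeet)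

lemma NoCutVertex.nonempty_link (hcut : NoCutVertex G) (hne : u ≠ v) (hu : u ∈ G.support)
    (hv : v ∈ G.support) : Nonempty (Link G u v) := by
  obtain ⟨w, hvw⟩ := hv
  obtain ⟨r, hr⟩ := hcut v u w hu ⟨v, hvw.symm⟩ hne hvw.ne'
  exact hcut.nonempty_link_of_walk r hr hvw.symm

end Links

section BadEnds

variable {V : Type*} {G : SimpleGraph V} {u a b c d x y z : V}

/-- `S` stands for the two neighbours of `u` on a link. The set is bad if there are two adjacent
neighbours of `u` outside `S` that have no neighbour in `S`. -/
def BadEnds (G : SimpleGraph V) (u : V) (S : Set V) : Prop :=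
  ∃ c ∈ G.neighborSet u \ S, ∃ d ∈ G.neighborSet u \ S, G.Adj c d ∧
    ∀ x ∈ S, ¬ G.Adj x c ∧ ¬ G.Adj x d

lemma neighborSet_sdiff_eq_pair [Finite V] (h4 : (G.neighborSet u).ncard ≤ 4) (ha : G.Adj u a)
    (hb : G.Adj u b) (hab : a ≠ b) (hc : c ∈ G.neighborSet u \ {a, b})
    (hd : d ∈ G.neighborSet u \ {a, b}) (hcd : c ≠ d) : G.neighborSet u \ {a, b} = {c, d} := by
  have hsub : {a, b} ⊆ G.neighborSet u := Set.pair_subset ha hb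
  have hcard : (G.neighborSet u \ {a, b}).ncard ≤ ({c, d} : Set V).ncard := by
    rw [Set.ncard_sdiff hsub, Set.ncard_pair hab, Set.ncard_pair hcd]
    omega
  exact (Set.eq_of_subset_of_ncard_le (Set.pair_subset hc hd) hcard).symm

lemma not_badEnds_of_adj [Finite V] (h4 : (G.neighborSet u).ncard ≤ 4) (hx : G.Adj u x)
    (hy : G.Adj u y) (hz : G.Adj u z) (hxy : x ≠ y) (hzy : z ≠ y) (hxz : G.Adj x z) :
    ¬ BadEnds G u {x, y} := by
  rintro ⟨c, hc, d, hd, hcd, hfar⟩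
  have hzrest : z ∈ G.neighborSet u \ {x, y} := ⟨hz, by simp [hxz.ne', hzy]⟩
  rw [neighborSet_sdiff_eq_pair h4 hx hy hxy hc hd hcd.ne] at hzrest
  obtain ⟨hxc, hxd⟩ := hfar x (.inl rfl)
  rcases hzrest with rfl | rfl
  exacts [hxc hxz, hxd hxz]

lemma BadEnds.eq [Finite V] (h4 : (G.neighborSet u).ncard ≤ 4) (ha : G.Adj u a) (hb : G.Adj u b)
    (hc : G.Adj u c) (hab : a ≠ b) (hac : a ≠ c) (h : BadEnds G u {a, b})
    (h' : BadEnds G u {a, c}) : b = c := by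
  by_contra hbc
  obtain ⟨p, hp, q, hq, hpq, -⟩ := h
  have hcrest : c ∈ G.neighborSet u \ {a, b} := ⟨hc, by simp [hac.symm, Ne.symm hbc]⟩
  rw [neighborSet_sdiff_eq_pair h4 ha hb hab hp hq hpq.ne] at hcrest
  rw [Set.pair_comm] at h'
  rcases hcrest with rfl | rfl
  · exact not_badEnds_of_adj h4 hc ha hq.1 hac.symm (by grind) hpq h'
  · exact not_badEnds_of_adj h4 hc ha hp.1 hac.symm (by grind) hpq.symm h'

end BadEnds

section MinimalLinks

variable {V : Type*} {G : SimpleGraph V} {u v y c d : V}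

namespace Link

/-- A link is bad if its ends are bad at one of its two end vertices. -/
def IsBad (L : Link G u v) : Prop :=
  BadEnds G u L.ends ∨ BadEnds G v L.reverse.ends

/-- A link is minimal if it is a shortest one among the links that are not bad. -/
def IsMinimal (L : Link G u v) : Prop :=
  ¬ L.IsBad ∧ ∀ L' : Link G u v, ¬ L'.IsBad → L.length ≤ L'.length

lemma isBad_swap {L : Link G u v} : L.swap.IsBad ↔ L.IsBad := by
  simp [IsBad]

lemma isBad_reverse {L : Link G u v} : L.reverse.IsBad ↔ L.IsBad := by
  simp [IsBad, or_comm]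

lemma IsMinimal.swap {L : Link G u v} (h : L.IsMinimal) : L.swap.IsMinimal :=
  ⟨isBad_swap.not.mpr h.1, fun L' hL' => L.length_swap ▸ h.2 L' hL'⟩

lemma IsMinimal.reverse {L : Link G u v} (h : L.IsMinimal) : L.reverse.IsMinimal := by
  refine ⟨isBad_reverse.not.mpr h.1, fun L' hL' => ?_⟩
  rw [length_reverse, ← L'.length_reverse]
  exact h.2 L'.reverse (isBad_reverse.not.mpr hL')

lemma exists_isMinimal (h : ∃ L : Link G u v, ¬ L.IsBad) : ∃ L : Link G u v, L.IsMinimal := by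
  obtain ⟨L, hL, hmin⟩ :=
    (measure Link.length).wf.has_min {L : Link G u v | ¬ L.IsBad} h
  exact ⟨L, hL, fun L' hL' => not_lt.mp (hmin L' hL')⟩

lemma mem_rest_iff {L : Link G u v} :
    c ∈ L.rest ↔ G.Adj u c ∧ c ≠ L.left.snd ∧ c ≠ L.right.snd := by
  simp [rest, ends]

lemma rest_eq_pair [Finite V] (L : Link G u v) (hne : u ≠ v) (hadj : ¬ G.Adj u v)
    (h4 : (G.neighborSet u).ncard ≤ 4) (hc : c ∈ L.rest) (hd : d ∈ L.rest) (hcd : c ≠ d) :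
    L.rest = {c, d} :=
  neighborSet_sdiff_eq_pair h4 (adj_snd_of_ne hne L.left) (adj_snd_of_ne hne L.right)
    (L.snd_ne hne hadj) hc hd hcd

section Detour

variable (L : Link G u v) {P₁ : G.Walk u y} {P₂ : G.Walk y v} (hL : L.left = P₁.append P₂)
  (huc : G.Adj u c) {R : G.Walk c y} (hR : R.IsPath) (huR : u ∉ R.support)
  (hmeet : ∀ z ∈ R.support, z ∈ L.verts → z = y)

lemma ends_detour : (L.detour hL huc hR huR hmeet).ends = {c, L.right.snd} := by
  simp [ends, detour]

lemma ends_reverse_detour (hyv : y ≠ v) :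
    (L.detour hL huc hR huR hmeet).reverse.ends = L.reverse.ends := by
  have hnil : ¬ (R.append P₂).Nil := fun hn => hyv (Walk.nil_append_iff.mp hn).2.eq
  rw [ends_reverse, ends_reverse, hL, penultimate_append_of_ne _ _ hyv]
  simp only [detour]
  rw [Walk.penultimate_cons_of_not_nil _ _ hnil, penultimate_append_of_ne _ _ hyv]

lemma verts_detour_subset :
    (L.detour hL huc hR huR hmeet).verts ⊆ L.verts ∪ {z | z ∈ R.support} := by
  rintro z (hz | hz)
  · have hsub : P₂.support ⊆ L.left.support := hL ▸ Walk.support_subset_support_append_right _ _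
    rw [detour, Walk.support_cons, List.mem_cons, Walk.mem_support_append_iff] at hz
    rcases hz with rfl | hz | hz
    exacts [.inl (.inl L.left.start_mem_support), .inr hz, .inl (.inl (hsub hz))]
  · exact .inl (.inr hz)

lemma edgeSet_subset_edges_detour : R.edgeSet ⊆ (L.detour hL huc hR huR hmeet).edges := by
  intro e he
  simp [edges, detour, Walk.edgeSet_append, he]

lemma mem_edges_detour {e : Sym2 V} (he : e ∈ L.edges) (heP : e ∉ P₁.edgeSet) :
    e ∈ (L.detour hL huc hR huR hmeet).edges := by
  rcases he with he | he
  · rw [hL, Walk.edgeSet_append] at he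
    simp [edges, detour, Walk.edgeSet_append, he.resolve_left heP]
  · exact .inr he

lemma not_badEnds_detour [Finite V] (hne : u ≠ v) (h4 : (G.neighborSet u).ncard ≤ 4)
    (hc : c ∈ L.rest) (hd : d ∈ L.rest) (hcd : G.Adj c d) :
    ¬ BadEnds G u (L.detour hL huc hR huR hmeet).ends := by
  rw [mem_rest_iff] at hc hd
  rw [ends_detour]
  exact not_badEnds_of_adj h4 huc (adj_snd_of_ne hne L.right) hd.1 hc.2.2 hd.2.2 hcd

end Detour

-- When the detour reaches the link only in `v`, it can replace either of the two paths, and at most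
-- one of the resulting links is bad at `v`.
lemma exists_not_badEnds_of_isPath_to_end [Finite V] (L : Link G u v) (hne : u ≠ v)
    (hadj : ¬ G.Adj u v) (hu4 : (G.neighborSet u).ncard ≤ 4) (hv4 : (G.neighborSet v).ncard ≤ 4)
    (hc : c ∈ L.rest) (hd : d ∈ L.rest) (hcd : G.Adj c d) {R : G.Walk c v} (hR : R.IsPath)
    (huR : u ∉ R.support) (hmeet : ∀ z ∈ R.support, z ∈ L.verts → z = v) :
    ∃ L' : Link G u v, ¬ L'.IsBad := by
  have hnil : ∀ P : G.Walk u v, P = P.append .nil := fun P => P.append_nil.symm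
  have huc : G.Adj u c := hc.1
  have hc' : c ∈ L.swap.rest := L.rest_swap.symm ▸ hc
  have hd' : d ∈ L.swap.rest := L.rest_swap.symm ▸ hd
  have hmeet' : ∀ z ∈ R.support, z ∈ L.swap.verts → z = v := by simpa using hmeet
  set L₁ := L.detour (hnil _) huc hR huR hmeet
  set L₂ := L.swap.detour (hnil _) huc hR huR hmeet'
  have hu₁ : ¬ BadEnds G u L₁.ends := L.not_badEnds_detour _ _ _ _ _ hne hu4 hc hd hcd
  have hu₂ : ¬ BadEnds G u L₂.ends := L.swap.not_badEnds_detour _ _ _ _ _ hne hu4 hc' hd' hcd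
  by_contra! hbad
  have hv₁ := (hbad L₁).resolve_left hu₁
  have hv₂ := (hbad L₂).resolve_left hu₂
  have hadj' : ¬ G.Adj v u := fun h => hadj h.symm
  exact L.reverse.snd_ne hne.symm hadj' <| .symm <| BadEnds.eq hv4 (adj_snd_of_ne hne.symm _)
    (adj_snd_of_ne hne.symm _) (adj_snd_of_ne hne.symm _) (L₁.reverse.snd_ne hne.symm hadj')
    (L₂.reverse.snd_ne hne.symm hadj') hv₁ hv₂

lemma exists_not_badEnds [Finite V] (hcut : NoCutVertex G) (L : Link G u v) (hne : u ≠ v)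
    (hadj : ¬ G.Adj u v) (hu4 : (G.neighborSet u).ncard ≤ 4)
    (hv4 : (G.neighborSet v).ncard ≤ 4) : ∃ L' : Link G u v, ¬ BadEnds G u L'.ends ∧
      (¬ BadEnds G v L.reverse.ends → ¬ BadEnds G v L'.reverse.ends) := by
  by_cases hbad : BadEnds G u L.ends
  swap
  · exact ⟨L, hbad, id⟩
  obtain ⟨c, hc, d, hd, hcd, -⟩ := hbad
  have huc : G.Adj u c := hc.1
  have hv : v ∈ G.support := ⟨_, adj_snd_of_ne hne.symm L.left.reverse⟩
  obtain ⟨R₀, hR₀⟩ := hcut u c v ⟨u, hc.1.symm⟩ hv hc.1.ne' hne.symm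
  obtain ⟨y, hy, R, hR, hsub, hmeet⟩ :=
    exists_isPath_first_mem R₀ (S := L.verts) (.inl L.left.end_mem_support)
  have huR : u ∉ R.support := fun h => hR₀ (hsub h)
  obtain rfl | hyv := eq_or_ne y v
  · obtain ⟨L', hL'⟩ :=
      L.exists_not_badEnds_of_isPath_to_end hne hadj hu4 hv4 hc hd hcd hR huR hmeet
    rw [IsBad, not_or] at hL'
    exact ⟨L', hL'.1, fun _ => hL'.2⟩
  wlog hyL : y ∈ L.left.support generalizing L
  · obtain ⟨L', hu, hv⟩ := this L.swap (by simpa using hc) (by simpa using hd)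
      (by simpa using hy) (by simpa using hmeet) (hy.resolve_left hyL)
    exact ⟨L', hu, by simpa [reverse_swap] using hv⟩
  obtain ⟨P₁, P₂, -, -, hL⟩ := L.isPath_left.mem_support_iff_exists_append.mp hyL
  refine ⟨L.detour hL huc hR huR hmeet, ?_, ?_⟩
  · exact L.not_badEnds_detour hL huc hR huR hmeet hne hu4 hc hd hcd
  · rw [L.ends_reverse_detour hL huc hR huR hmeet hyv]
    exact id

end Link

lemma NoCutVertex.exists_not_isBad [Finite V] (hcut : NoCutVertex G) (hne : u ≠ v)
    (hadj : ¬ G.Adj u v) (hu : u ∈ G.support) (hv : v ∈ G.support)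
    (hu4 : (G.neighborSet u).ncard ≤ 4) (hv4 : (G.neighborSet v).ncard ≤ 4) :
    ∃ L : Link G u v, ¬ L.IsBad := by
  obtain ⟨L⟩ := hcut.nonempty_link hne hu hv
  obtain ⟨L₁, hu₁, -⟩ := L.exists_not_badEnds hcut hne hadj hu4 hv4
  obtain ⟨L₂, hv₂, hu₂⟩ :=
    L₁.reverse.exists_not_badEnds hcut hne.symm (fun h => hadj h.symm) hv4 hu4
  rw [Link.reverse_reverse] at hu₂
  exact ⟨L₂.reverse, Link.isBad_reverse.not.mpr (not_or.mpr ⟨hv₂, hu₂ hu₁⟩)⟩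

lemma Link.IsMinimal.badEnds_of_mem_left {L : Link G u v} (h : L.IsMinimal) (hadj : ¬ G.Adj u v)
    (hc : c ∈ L.left.support) (huc : G.Adj u c) (hcs : c ≠ L.left.snd) :
    BadEnds G u {c, L.right.snd} := by
  have hcv : c ≠ v := fun h => hadj (h ▸ huc)
  obtain ⟨P₁, P₂, -, -, hL⟩ := L.isPath_left.mem_support_iff_exists_append.mp hc
  have hlen : 2 ≤ P₁.length := by
    cases P₁ with
    | nil => exact absurd rfl huc.ne
    | cons huw P =>
      cases P with
      | nil => exact absurd (by simp [hL]) hcs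
      | cons => simp
  have huc' : u ∉ (Walk.nil : G.Walk c c).support := by simpa using huc.ne
  have hmeet : ∀ z ∈ (Walk.nil : G.Walk c c).support, z ∈ L.verts → z = c := by simp
  set L' := L.detour hL huc .nil huc' hmeet with hL'
  by_contra hbad
  have hnot : ¬ L'.IsBad := by
    rw [IsBad, hL', L.ends_detour hL huc .nil huc' hmeet,
      L.ends_reverse_detour hL huc .nil huc' hmeet hcv]
    exact not_or.mpr ⟨hbad, fun h' => h.1 (.inr h')⟩
  have hlt : L'.length < L.length := by
    simp only [hL', length, detour, hL, Walk.length_cons, Walk.length_append, Walk.length_nil]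
    omega
  exact (h.2 L' hnot).not_gt hlt

end MinimalLinks

section RemovingLinks

variable {V : Type*} {G : SimpleGraph V} {u v : V}

lemma two_le_length_of_not_adj (hne : u ≠ v) (hadj : ¬ G.Adj u v) (p : G.Walk u v) :
    2 ≤ p.length := by
  cases p with
  | nil => exact absurd rfl hne
  | cons h q =>
    cases q with
    | nil => exact absurd h hadj
    | cons => simp

lemma start_notMem_support_tail {p : G.Walk u v} (hp : p.IsPath) : u ∉ p.support.tail := by
  have h := hp.support_nodup
  rw [← p.cons_tail_support, List.nodup_cons] at h
  exact h.1

namespace Link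

lemma edges_subset (L : Link G u v) : L.edges ⊆ G.edgeSet :=
  Set.union_subset (fun _ he => L.left.edges_subset_edgeSet he)
    fun _ he => L.right.edges_subset_edgeSet he

lemma isCycleEdgeSet_edges (L : Link G u v) (hne : u ≠ v) (hadj : ¬ G.Adj u v) :
    IsCycleEdgeSet L.edges := by
  have hcycle : (L.left.append L.right.reverse).IsCycle := by
    refine L.isPath_left.isCycle_append L.isPath_right.reverse (fun z hz hz' => ?_)
      (.inl (two_le_length_of_not_adj hne hadj _))
    have hr := List.mem_of_mem_tail hz'
    rw [Walk.support_reverse, List.mem_reverse] at hr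
    rcases L.eq_or_eq z (List.mem_of_mem_tail hz) hr with rfl | rfl
    · exact start_notMem_support_tail L.isPath_left hz
    · exact start_notMem_support_tail L.isPath_right.reverse hz'
  refine ⟨u, (L.left.append L.right.reverse).mapLe le_top, hcycle.mapLe le_top, ?_⟩
  ext e
  simp [edges]

lemma neighborSet_deleteEdges (L : Link G u v) (hne : u ≠ v) :
    (G.deleteEdges L.edges).neighborSet u = L.rest := by
  have hsnd : ∀ p : G.Walk u v, p.IsPath → ∀ w, s(u, w) ∈ p.edgeSet ↔ w = p.snd := by
    refine fun p hp w => ⟨fun h => hp.eq_snd_of_mem_edges h, ?_⟩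
    rintro rfl
    exact p.mk_start_snd_mem_edges fun hn => hne hn.eq
  ext w
  rw [mem_neighborSet, deleteEdges_adj, mem_rest_iff, edges, Set.mem_union,
    hsnd _ L.isPath_left, hsnd _ L.isPath_right, not_or]

lemma rest_eq_empty_or_eq_pair [Finite V] (L : Link G u v) (heven : IsEvenGraph G) (hne : u ≠ v)
    (hadj : ¬ G.Adj u v) (h4 : (G.neighborSet u).ncard ≤ 4) :
    L.rest = ∅ ∨ ∃ c d, c ≠ d ∧ L.rest = {c, d} := by
  have hrest : Even L.rest.ncard := by
    rw [← L.neighborSet_deleteEdges hne]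
    exact heven.deleteEdges (L.isCycleEdgeSet_edges hne hadj) L.edges_subset u
  have hends : L.ends ⊆ G.neighborSet u :=
    Set.pair_subset (adj_snd_of_ne hne L.left) (adj_snd_of_ne hne L.right)
  have hcard : L.rest.ncard = (G.neighborSet u).ncard - 2 := by
    rw [rest, Set.ncard_sdiff hends, ends, Set.ncard_pair (L.snd_ne hne hadj)]
  rcases Nat.eq_zero_or_pos L.rest.ncard with h0 | h0
  · exact .inl ((Set.ncard_eq_zero).mp h0)
  · exact .inr (Set.ncard_eq_two.mp (by grind))

/-- A link is good at `u` if adjacent neighbours of `u` off the ends of the link are joined by an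
edge of the link; then `u` can be suppressed after removing the link. -/
def IsGood (L : Link G u v) : Prop :=
  ∀ c ∈ L.rest, ∀ d ∈ L.rest, G.Adj c d → s(c, d) ∈ L.edges

lemma isGood_of_isIndepSet {L : Link G u v} (h : G.IsIndepSet L.rest) : L.IsGood :=
  fun _ hc _ hd hcd => absurd hcd (h hc hd hcd.ne)

lemma isGood_of_rest_eq_pair {L : Link G u v} {x y : V} (h : L.rest = {x, y})
    (hxy : G.Adj x y → s(x, y) ∈ L.edges) : L.IsGood := by
  intro c hc d hd hcd
  rw [h] at hc hd
  grind [hcd.ne, hcd.symm, Sym2.eq_swap]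

lemma IsGood.suppressible [Finite V] {L : Link G u v} (hL : L.IsGood) (heven : IsEvenGraph G)
    (hne : u ≠ v) (hadj : ¬ G.Adj u v) (h4 : (G.neighborSet u).ncard ≤ 4) :
    Suppressible (G.deleteEdges L.edges) u := by
  rw [Suppressible, L.neighborSet_deleteEdges hne]
  refine (L.rest_eq_empty_or_eq_pair heven hne hadj h4).imp_right ?_
  rintro ⟨c, d, hcd, h⟩
  refine ⟨c, d, hcd, fun hadj => ?_, h⟩
  rw [deleteEdges_adj] at hadj
  exact hadj.2 (hL c (h ▸ .inl rfl) d (h ▸ .inr rfl) hadj.1)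

end Link

/-- The situation of the induction step: `G` is a planar even graph without cut vertex, `u` and `v`
are nonadjacent vertices of degree `2` or `4`, and smaller graphs satisfy Hajós' conjecture. -/
structure LowDegreePair (G : SimpleGraph V) (u v : V) : Prop where
  planar : IsPlanar G
  even : IsEvenGraph G
  ih : HajosBelow V G.support.ncard
  noCutVertex : NoCutVertex G
  ne : u ≠ v
  not_adj : ¬ G.Adj u v
  left_mem : u ∈ G.support
  right_mem : v ∈ G.support
  left_le : (G.neighborSet u).ncard ≤ 4
  right_le : (G.neighborSet v).ncard ≤ 4

namespace LowDegreePair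

lemma symm (S : LowDegreePair G u v) : LowDegreePair G v u :=
  ⟨S.planar, S.even, S.ih, S.noCutVertex, S.ne.symm, fun h => S.not_adj h.symm, S.right_mem,
    S.left_mem, S.right_le, S.left_le⟩

lemma satisfiesHajos_of_isGood [Finite V] (S : LowDegreePair G u v) {L : Link G u v}
    (hu : L.IsGood) (hv : L.reverse.IsGood) (hdiff : L.rest = L.reverse.rest → L.rest = ∅) :
    SatisfiesHajos G := by
  have hNu := L.neighborSet_deleteEdges S.ne
  have hNv := L.reverse.neighborSet_deleteEdges S.ne.symm
  have hsv := hv.suppressible S.even S.ne.symm S.symm.not_adj S.right_le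
  rw [Link.edges_reverse] at hNv hsv
  refine satisfiesHajos_of_deleteEdges S.planar S.even S.ih
    (L.isCycleEdgeSet_edges S.ne S.not_adj) L.edges_subset S.left_mem S.right_mem
    ⟨S.ne, fun h => S.not_adj (deleteEdges_le _ h),
      hu.suppressible S.even S.ne S.not_adj S.left_le, hsv, ?_⟩
  rwa [hNu, hNv]

end LowDegreePair

end RemovingLinks

section Rerouting

variable {V : Type*} {G : SimpleGraph V} {u v : V}

namespace Link

/-- The neighbours of `u` off the ends of the link are not on the link at all, and a path of length
two through them starts at an end of the link: replacing the edge `ux` by the path `u, d, c, x`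
gives a link through both of them. -/
def IsReroutable (L : Link G u v) : Prop :=
  Disjoint L.rest L.verts ∧ ∃ x ∈ L.ends, ∃ c ∈ L.rest, ∃ d ∈ L.rest, G.Adj x c ∧ G.Adj c d

/-- The properties of the link `L'` that arises by rerouting `L` near `u`: in particular, the two
neighbours of `u` off its ends are joined by an edge of `L'`. -/
structure Rerouted (L L' : Link G u v) : Prop where
  ends_reverse : L'.reverse.ends = L.reverse.ends
  verts_subset : L'.verts ⊆ L.verts ∪ L.rest
  mem_edges : ∀ e ∈ L.edges, u ∉ e → e ∈ L'.edges
  rest_eq : ∃ x ∈ L.ends, ∃ c ∈ L.rest, s(x, c) ∈ L'.edges ∧ L'.rest = {x, c}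

lemma Rerouted.rest_reverse {L L' : Link G u v} (h : L.Rerouted L') :
    L'.reverse.rest = L.reverse.rest := by
  rw [rest, h.ends_reverse, rest]

lemma Rerouted.isGood {L L' : Link G u v} (h : L.Rerouted L') : L'.IsGood := by
  obtain ⟨x, -, c, -, hxc, hrest⟩ := h.rest_eq
  exact isGood_of_rest_eq_pair hrest fun _ => hxc

lemma exists_rerouted_of_adj_snd [Finite V] (L : Link G u v) (hne : u ≠ v) (hadj : ¬ G.Adj u v)
    (h4 : (G.neighborSet u).ncard ≤ 4) (hdisj : Disjoint L.rest L.verts) {c d : V}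
    (hc : c ∈ L.rest) (hd : d ∈ L.rest) (hxc : G.Adj L.left.snd c) (hcd : G.Adj c d) :
    ∃ L' : Link G u v, L.Rerouted L' := by
  have hux := adj_snd_of_ne hne L.left
  have hmem : L.left.snd ∈ L.verts := .inl (snd_mem_support _)
  have hcL := hdisj.notMem_of_mem_left hc
  have hdL := hdisj.notMem_of_mem_left hd
  obtain ⟨huc, hcx, -⟩ := mem_rest_iff.mp hc
  obtain ⟨hud, hdx, -⟩ := mem_rest_iff.mp hd
  have hL : L.left = (Walk.cons hux .nil).append L.left.tail := by
    simp [Walk.cons_tail_eq _ fun hn : L.left.Nil => hne hn.eq]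
  set R : G.Walk d L.left.snd := .cons hcd.symm (.cons hxc.symm .nil) with hR
  have hRpath : R.IsPath := by
    simp [hR, Walk.cons_isPath_iff, hcx, hdx, hcd.ne']
  have huR : u ∉ R.support := by
    simp [hR, hux.ne, huc.ne, hud.ne]
  have hmeet : ∀ z ∈ R.support, z ∈ L.verts → z = L.left.snd := by
    simp only [hR, Walk.support_cons, Walk.support_nil, List.mem_cons]
    grind
  have hxv : L.left.snd ≠ v := fun h => hadj (h ▸ hux)
  set L' := L.detour hL hud hRpath huR hmeet with hL'
  have hends : L'.ends = {d, L.right.snd} := L.ends_detour hL hud hRpath huR hmeet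
  have hrest : L'.rest = {L.left.snd, c} := by
    refine L'.rest_eq_pair hne hadj h4 ?_ ?_ hcx.symm
    · exact ⟨hux, by rw [hends]; simp [hdx.symm, L.snd_ne hne hadj]⟩
    · exact ⟨huc, by rw [hends]; simp [hcd.ne, (mem_rest_iff.mp hc).2.2]⟩
  refine ⟨L', L.ends_reverse_detour hL hud hRpath huR hmeet hxv, ?_, ?_,
    L.left.snd, .inl rfl, c, hc, ?_, hrest⟩
  · refine (L.verts_detour_subset hL hud hRpath huR hmeet).trans ?_
    refine Set.union_subset Set.subset_union_left fun z hz => ?_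
    simp only [hR, Walk.support_cons, Walk.support_nil, Set.mem_ofPred_eq, List.mem_cons,
      List.not_mem_nil, or_false] at hz
    rcases hz with rfl | rfl | rfl
    exacts [.inr hd, .inr hc, .inl hmem]
  · refine fun e he hue => L.mem_edges_detour hL hud hRpath huR hmeet he fun he' => hue ?_
    rw [Walk.edgeSet_cons, Walk.edgeSet_nil] at he'
    grind
  · exact L.edgeSet_subset_edges_detour hL hud hRpath huR hmeet (by simp [hR, Sym2.eq_swap])

lemma IsReroutable.exists_rerouted [Finite V] {L : Link G u v} (h : L.IsReroutable) (hne : u ≠ v)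
    (hadj : ¬ G.Adj u v) (h4 : (G.neighborSet u).ncard ≤ 4) :
    ∃ L' : Link G u v, L.Rerouted L' := by
  obtain ⟨hdisj, x, rfl | rfl, c, hc, d, hd, hxc, hcd⟩ := h
  · exact L.exists_rerouted_of_adj_snd hne hadj h4 hdisj hc hd hxc hcd
  · rw [← rest_swap] at hc hd
    obtain ⟨L', h₁, h₂, h₃, h₄⟩ := L.swap.exists_rerouted_of_adj_snd hne hadj h4
      (by simpa using hdisj) hc hd hxc hcd
    exact ⟨L', by simpa [reverse_swap] using h₁, by simpa using h₂, by simpa using h₃,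
      by simpa using h₄⟩

lemma IsMinimal.isIndepSet_or_isReroutable [Finite V] {L : Link G u v} (h : L.IsMinimal)
    (hne : u ≠ v) (hadj : ¬ G.Adj u v) (h4 : (G.neighborSet u).ncard ≤ 4) :
    G.IsIndepSet L.rest ∨ L.IsReroutable := by
  by_cases hindep : G.IsIndepSet L.rest
  · exact .inl hindep
  have hadj' : ∃ c ∈ L.rest, ∃ d ∈ L.rest, G.Adj c d := by
    simp only [IsIndepSet, Set.Pairwise] at hindep
    grind
  obtain ⟨c, hc, d, hd, hcd⟩ := hadj'
  have hoff : ∀ L : Link G u v, L.IsMinimal → ∀ c ∈ L.rest, ∀ d ∈ L.rest, G.Adj c d →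
      c ∉ L.left.support := by
    intro L h c hc d hd hcd hmem
    rw [mem_rest_iff] at hc hd
    exact not_badEnds_of_adj h4 hc.1 (adj_snd_of_ne hne L.right) hd.1 hc.2.2 hd.2.2 hcd
      (h.badEnds_of_mem_left hadj hmem hc.1 hc.2.1)
  have hoff' : ∀ c ∈ L.rest, ∀ d ∈ L.rest, G.Adj c d → c ∉ L.verts := fun c hc d hd hcd =>
    not_or.mpr ⟨hoff L h c hc d hd hcd,
      hoff L.swap h.swap c (by simpa using hc) d (by simpa using hd) hcd⟩
  have hdisj : Disjoint L.rest L.verts := by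
    rw [L.rest_eq_pair hne hadj h4 hc hd hcd.ne, Set.disjoint_left]
    rintro z (rfl | rfl)
    exacts [hoff' _ hc _ hd hcd, hoff' _ hd _ hc hcd.symm]
  by_contra! hcon
  refine h.1 (.inl ⟨c, hc, d, hd, hcd, fun x hx => ⟨fun hxc => ?_, fun hxd => ?_⟩⟩)
  · exact hcon.2 ⟨hdisj, x, hx, c, hc, d, hd, hxc, hcd⟩
  · exact hcon.2 ⟨hdisj, x, hx, d, hd, c, hc, hxd, hcd.symm⟩

end Link

namespace LowDegreePair

lemma satisfiesHajos_of_isIndepSet_reverse [Finite V] (S : LowDegreePair G u v) {L : Link G u v}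
    (h : L.IsMinimal) (hv : G.IsIndepSet L.reverse.rest)
    (hdiff : G.IsIndepSet L.rest → L.rest = L.reverse.rest → L.rest = ∅) : SatisfiesHajos G := by
  rcases h.isIndepSet_or_isReroutable S.ne S.not_adj S.left_le with hu | hu
  · exact S.satisfiesHajos_of_isGood (Link.isGood_of_isIndepSet hu) (Link.isGood_of_isIndepSet hv)
      (hdiff hu)
  obtain ⟨L', hL'⟩ := hu.exists_rerouted S.ne S.not_adj S.left_le
  rw [← hL'.rest_reverse] at hv
  refine S.satisfiesHajos_of_isGood hL'.isGood (Link.isGood_of_isIndepSet hv) fun heq => ?_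
  obtain ⟨x, -, c, -, hxc, hrest⟩ := hL'.rest_eq
  rw [← heq, hrest] at hv
  have hadj : G.Adj x c := L'.edges_subset hxc
  exact absurd hadj (hv (.inl rfl) (.inr rfl) hadj.ne)

lemma satisfiesHajos_of_isReroutable [Finite V] (S : LowDegreePair G u v) {L : Link G u v}
    (hu : L.IsReroutable) (hv : L.reverse.IsReroutable) (hdisj : Disjoint L.rest L.reverse.rest) :
    SatisfiesHajos G := by
  obtain ⟨L₁, h₁⟩ := hu.exists_rerouted S.ne S.not_adj S.left_le
  have hrest₁ := h₁.rest_reverse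
  have hv₁ : L₁.reverse.IsReroutable := by
    refine ⟨?_, ?_⟩
    · rw [hrest₁, Link.verts_reverse]
      refine .mono_right h₁.verts_subset (.union_right ?_ hdisj.symm)
      simpa using hv.1
    · rw [hrest₁, h₁.ends_reverse]
      exact hv.2
  obtain ⟨L₂, h₂⟩ := hv₁.exists_rerouted S.symm.ne S.symm.not_adj S.right_le
  have hrest₂ : L₂.reverse.rest = L₁.rest := by simpa using h₂.rest_reverse
  obtain ⟨x, -, c, hc, hxc, hrest⟩ := h₁.rest_eq
  obtain ⟨y, hy, d, hd, hyd, hrest'⟩ := h₂.rest_eq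
  rw [hrest₁] at hd
  have hv_ne : ∀ w ∈ L₁.rest, w ≠ v := fun w hw h => S.not_adj (h ▸ hw.1)
  have hxc₂ : s(x, c) ∈ L₂.edges := by
    refine h₂.mem_edges _ (by simpa using hxc) ?_
    rw [Sym2.mem_iff, not_or]
    exact ⟨(hv_ne x (hrest ▸ .inl rfl)).symm, (hv_ne c (hrest ▸ .inr rfl)).symm⟩
  refine S.satisfiesHajos_of_isGood (L := L₂.reverse)
    (Link.isGood_of_rest_eq_pair (hrest₂.trans hrest) fun _ => by simpa using hxc₂)
    (by simpa using h₂.isGood) fun heq => ?_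
  rw [Link.reverse_reverse, hrest₂, hrest, hrest'] at heq
  have hcy : c = y := by
    have hmem : c ∈ ({y, d} : Set V) := heq ▸ .inr rfl
    exact hmem.resolve_right fun h => hdisj.notMem_of_mem_left hc (h ▸ hd)
  rw [h₁.ends_reverse, ← hcy] at hy
  have hverts : c ∈ L.reverse.verts := by
    rcases hy with rfl | rfl
    exacts [.inl (snd_mem_support _), .inr (snd_mem_support _)]
  rw [Link.verts_reverse] at hverts
  exact absurd hverts (hu.1.notMem_of_mem_left hc)

end LowDegreePair

end Rerouting

section CommonNeighbours

variable {V : Type*} {G : SimpleGraph V} {u v a b e f x y : V}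

lemma exists_link_of_isPath (hne : u ≠ v) (hux : G.Adj u x) (hvy : G.Adj v y) (hue : G.Adj u e)
    (hve : G.Adj v e) {M : G.Walk x y} (hM : M.IsPath) (hu : u ∉ M.support) (hv : v ∉ M.support)
    (he : e ∉ M.support) :
    ∃ L : Link G u v, L.ends = {x, e} ∧ L.reverse.ends = {y, e} ∧ M.edgeSet ⊆ L.edges ∧
      L.length = M.length + 4 := by
  have hleft : (Walk.cons hux (M.concat hvy.symm)).IsPath := by
    simp [Walk.cons_isPath_iff, Walk.concat_isPath_iff, hM, hu, hv, hne]
  have hright : (Walk.cons hue (.cons hve.symm .nil)).IsPath := by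
    simp [Walk.cons_isPath_iff, hue.ne, hve.ne', hne]
  have hmeet : ∀ z ∈ (Walk.cons hux (M.concat hvy.symm)).support,
      z ∈ (Walk.cons hue (.cons hve.symm .nil)).support → z = u ∨ z = v := by
    intro z hz hz'
    simp only [Walk.support_cons, Walk.support_concat, Walk.support_nil, List.mem_cons,
      List.mem_append, List.not_mem_nil, or_false] at hz hz'
    grind
  refine ⟨⟨_, _, hleft, hright, hmeet⟩, by simp [Link.ends], ?_, ?_, ?_⟩
  · simp [Link.ends, Link.reverse]
  · intro s hs
    simp [Link.edges, Walk.edgeSet_concat, hs]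
  · simp [Link.length]

/-- The distinct vertices `a`, `b`, `e` and `f` are the neighbours of `u` and also those of `v`. -/
structure CommonNeighbours (G : SimpleGraph V) (u v a b e f : V) : Prop where
  nodup : [a, b, e, f].Nodup
  left : ∀ w, G.Adj u w ↔ w ∈ [a, b, e, f]
  right : ∀ w, G.Adj v w ↔ w ∈ [a, b, e, f]

namespace CommonNeighbours

lemma perm {a' b' e' f' : V} (h : CommonNeighbours G u v a b e f)
    (hp : [a, b, e, f].Perm [a', b', e', f']) : CommonNeighbours G u v a' b' e' f' :=
  ⟨hp.nodup_iff.mp h.nodup, fun w => (h.left w).trans hp.mem_iff,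
    fun w => (h.right w).trans hp.mem_iff⟩

lemma adj_iff (h : CommonNeighbours G u v a b e f) (w : V) : G.Adj u w ↔ G.Adj v w :=
  (h.left w).trans (h.right w).symm

lemma exists_of_adj (h : CommonNeighbours G u v a b e f) (hx : G.Adj u x) (hy : G.Adj u y)
    (hxy : x ≠ y) : ∃ e' f', CommonNeighbours G u v x y e' f' := by
  have hpx := List.perm_cons_erase ((h.left x).mp hx)
  have hyx : y ∈ [a, b, e, f].erase x := (List.mem_erase_of_ne hxy.symm).mpr ((h.left y).mp hy)
  have hp := hpx.trans ((List.perm_cons_erase hyx).cons x)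
  obtain ⟨e', f', hef⟩ := List.length_eq_two.mp (by simpa using hp.length_eq.symm)
  exact ⟨e', f', h.perm (hef ▸ hp)⟩

lemma neighborSet_sdiff (h : CommonNeighbours G u v a b e f) :
    G.neighborSet u \ {a, e} = {b, f} := by
  have hd := h.nodup
  ext w
  simp only [Set.mem_sdiff, mem_neighborSet, h.left, Set.mem_insert_iff, Set.mem_singleton_iff,
    List.mem_cons, List.not_mem_nil, or_false]
  grind

lemma exists_link (h : CommonNeighbours G u v a b e f) (hne : u ≠ v) {M : G.Walk a b}
    (hM : M.IsPath) (hu : u ∉ M.support) (hv : v ∉ M.support) (he : e ∉ M.support) :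
    ∃ L : Link G u v, L.rest = {b, f} ∧ L.reverse.rest = {a, f} ∧ M.edgeSet ⊆ L.edges := by
  obtain ⟨L, hends, hends', hedges, -⟩ := exists_link_of_isPath hne ((h.left a).mpr (by simp))
    ((h.right b).mpr (by simp)) ((h.left e).mpr (by simp)) ((h.right e).mpr (by simp)) hM hu hv he
  have hvu : CommonNeighbours G v u b a e f := perm ⟨h.nodup, h.right, h.left⟩ (.swap _ _ _)
  exact ⟨L, by rw [Link.rest, hends, h.neighborSet_sdiff],
    by rw [Link.rest, hends', hvu.neighborSet_sdiff], hedges⟩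

lemma not_adj_of_adj (h : CommonNeighbours G u v a b e f)
    (hmatch : ∀ x y z, G.Adj u x → G.Adj u y → G.Adj u z → G.Adj x y → G.Adj y z → x = z)
    (hbf : G.Adj b f) : ¬ G.Adj b e := by
  intro hbe
  have hef := hmatch e b f ((h.left e).mpr (by simp)) ((h.left b).mpr (by simp))
    ((h.left f).mpr (by simp)) hbe.symm hbf
  have hd := h.nodup
  grind

lemma exists_isPath (h : CommonNeighbours G u v a b e f) (hcut : NoCutVertex G)
    (ha : ¬ G.neighborSet a ⊆ {u, v}) :
    ∃ z, G.Adj u z ∧ z ≠ a ∧ ∃ M : G.Walk a z, M.IsPath ∧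
      ∀ w ∈ M.support, (G.Adj u w ∨ w = u ∨ w = v) → w = a ∨ w = z := by
  obtain ⟨y, hay, hy⟩ := Set.not_subset.mp ha
  rw [mem_neighborSet] at hay
  obtain ⟨hyu, hyv⟩ := not_or.mp hy
  have hd := h.nodup
  have hub : G.Adj u b := (h.left b).mpr (by simp)
  obtain ⟨r, hr⟩ := hcut a y b ⟨a, hay.symm⟩ ⟨u, hub.symm⟩ hay.ne' (by grind)
  obtain ⟨z, hz, q, hq, hqr, hqS⟩ :=
    exists_isPath_first_mem r (S := {w | G.Adj u w ∨ w = u ∨ w = v}) (.inl hub)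
  have hpen : y ≠ z → G.Adj q.penultimate z ∧ ¬ G.Adj u q.penultimate := fun hyz =>
    have hadj := q.adj_penultimate fun hn => hyz hn.eq
    ⟨hadj, fun huq => hadj.ne (hqS _ (q.getVert_mem_support _) (.inl huq))⟩
  have hzu : z ≠ u := by
    rintro rfl
    exact (hpen hyu).2 (hpen hyu).1.symm
  have hzv : z ≠ v := by
    rintro rfl
    exact (hpen hyv).2 ((h.adj_iff _).mpr (hpen hyv).1.symm)
  have haq : a ∉ q.support := fun h => hr (hqr h)
  refine ⟨z, hz.resolve_right (not_or.mpr ⟨hzu, hzv⟩), fun hza => haq (hza ▸ q.end_mem_support),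
    .cons hay q, (Walk.cons_isPath_iff _ _).mpr ⟨hq, haq⟩, fun w hw hwS => ?_⟩
  rw [Walk.support_cons, List.mem_cons] at hw
  exact hw.imp_right fun hw => hqS w hw hwS

variable [Finite V]

lemma satisfiesHajos_of_isPath (h : CommonNeighbours G u v a b e f) (S : LowDegreePair G u v)
    {M : G.Walk a b} (hM : M.IsPath) (hu : u ∉ M.support) (hv : v ∉ M.support)
    (he : e ∉ M.support) (hbf : G.Adj b f → s(b, f) ∈ M.edgeSet)
    (haf : G.Adj a f → s(a, f) ∈ M.edgeSet) : SatisfiesHajos G := by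
  obtain ⟨L, hrest, hrest', hedges⟩ := h.exists_link S.ne hM hu hv he
  have hd := h.nodup
  have hu : L.IsGood := Link.isGood_of_rest_eq_pair hrest fun hadj => hedges (hbf hadj)
  have hv : L.reverse.IsGood := Link.isGood_of_rest_eq_pair hrest' fun hadj => by
    rw [Link.edges_reverse]
    exact hedges (haf hadj)
  refine S.satisfiesHajos_of_isGood hu hv fun heq => ?_
  have ha : a ∈ ({b, f} : Set V) := hrest ▸ heq ▸ hrest' ▸ .inl rfl
  simp only [Set.mem_insert_iff, Set.mem_singleton_iff] at ha
  grind

lemma satisfiesHajos_of_adj_of_adj (h : CommonNeighbours G u v a b e f) (S : LowDegreePair G u v)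
    (haf : G.Adj a f) (hfb : G.Adj f b) : SatisfiesHajos G := by
  have hd := h.nodup
  have hu := G.irrefl (v := u)
  have hv := G.irrefl (v := v)
  rw [h.left] at hu
  rw [h.right] at hv
  refine h.satisfiesHajos_of_isPath S (M := .cons haf (.cons hfb .nil)) ?_ ?_ ?_ ?_ ?_ ?_
  · simp only [Walk.cons_isPath_iff, Walk.support_cons, Walk.support_nil]
    grind [Walk.IsPath.nil]
  all_goals simp only [Walk.support_cons, Walk.support_nil, Walk.edgeSet_cons]; grind

lemma satisfiesHajos_of_neighborSet_subset (h : CommonNeighbours G u v a b e f)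
    (S : LowDegreePair G u v) (ha : G.neighborSet a ⊆ {u, v}) (hbf : ¬ G.Adj b f) :
    SatisfiesHajos G := by
  have hua : G.Adj u a := (h.left a).mpr (by simp)
  have hva : G.Adj v a := (h.right a).mpr (by simp)
  have hd := h.nodup
  obtain ⟨L, hends, hends', -, -⟩ := exists_link_of_isPath S.ne hua hva
    ((h.left e).mpr (by simp)) ((h.right e).mpr (by simp)) Walk.IsPath.nil
    (by simpa using hua.ne) (by simpa using hva.ne) (e := e) (by simp; grind)
  have hrest : L.rest = {b, f} := by rw [Link.rest, hends, h.neighborSet_sdiff]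
  have hisolated : (G.deleteEdges L.edges).neighborSet a = ∅ := by
    refine Set.eq_empty_of_forall_notMem fun w hw => ?_
    have hwa : (G.deleteEdges L.edges).Adj w a := (mem_neighborSet _ _ _ |>.mp hw).symm
    rcases ha (deleteEdges_le _ hw) with rfl | rfl
    · have haL : a ∈ L.rest := L.neighborSet_deleteEdges S.ne ▸ hwa
      exact haL.2 (hends ▸ .inl rfl)
    · have haL : a ∈ L.reverse.rest := by
        rw [← L.reverse.neighborSet_deleteEdges S.ne.symm, Link.edges_reverse]
        exact hwa
      exact haL.2 (hends' ▸ .inl rfl)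
  have hgood : L.IsGood := Link.isGood_of_rest_eq_pair hrest fun hadj => absurd hadj hbf
  exact satisfiesHajos_of_deleteEdges S.planar S.even S.ih
    (L.isCycleEdgeSet_edges S.ne S.not_adj) L.edges_subset ⟨u, hua.symm⟩ S.left_mem
    ⟨hua.ne', fun hadj => (hisolated ▸ hadj : u ∈ (∅ : Set V)), .inl hisolated,
      hgood.suppressible S.even S.ne S.not_adj S.left_le, fun _ => hisolated⟩

lemma satisfiesHajos_of_matching (h : CommonNeighbours G u v a b e f) (S : LowDegreePair G u v)
    (hmatch : ∀ x y z, G.Adj u x → G.Adj u y → G.Adj u z → G.Adj x y → G.Adj y z → x = z)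
    {M : G.Walk a b} (hM : M.IsPath) (hu : u ∉ M.support) (hv : v ∉ M.support)
    (he : e ∉ M.support) (hf : f ∉ M.support) : SatisfiesHajos G := by
  have of_adj : ∀ {e f : V}, CommonNeighbours G u v a b e f → e ∉ M.support → f ∉ M.support →
      G.Adj f a → SatisfiesHajos G := by
    intro e f h he hf hfa
    have hd := h.nodup
    have huf : G.Adj u f := (h.left f).mpr (by simp)
    have hvf : G.Adj v f := (h.right f).mpr (by simp)
    have h' : CommonNeighbours G u v f b e a := h.perm (by grind)
    refine h'.satisfiesHajos_of_isPath S (M := .cons hfa M) ?_ ?_ ?_ ?_ ?_ ?_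
    · exact (Walk.cons_isPath_iff _ _).mpr ⟨hM, hf⟩
    · simp [huf.ne, hu]
    · simp [hvf.ne, hv]
    · rw [Walk.support_cons]
      grind
    · have h'' : CommonNeighbours G u v e a b f := h.perm (by grind)
      exact fun hba => absurd hba.symm (h''.not_adj_of_adj hmatch hfa.symm)
    · simp
  have hswap : CommonNeighbours G u v a b f e := h.perm (by grind)
  by_cases hfa : G.Adj f a
  · exact of_adj h he hf hfa
  by_cases hea : G.Adj e a
  · exact of_adj hswap hf he hea
  by_cases hbf : G.Adj b f
  · exact hswap.satisfiesHajos_of_isPath S hM hu hv hf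
      (fun hbe => absurd hbe (h.not_adj_of_adj hmatch hbf)) fun hae => absurd hae.symm hea
  · exact h.satisfiesHajos_of_isPath S hM hu hv he (fun h' => absurd h' hbf)
      fun h' => absurd h'.symm hfa

lemma satisfiesHajos (h : CommonNeighbours G u v a b e f) (S : LowDegreePair G u v) :
    SatisfiesHajos G := by
  by_cases hmatch : ∀ x y z, G.Adj u x → G.Adj u y → G.Adj u z → G.Adj x y → G.Adj y z → x = z
  swap
  · push Not at hmatch
    obtain ⟨x, y, z, hx, hy, hz, hxy, hyz, hxz⟩ := hmatch
    obtain ⟨e', f', h'⟩ := h.exists_of_adj hx hz hxz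
    have hyef : y = e' ∨ y = f' := by
      have hmem := (h'.left y).mp hy
      grind [hxy.ne, hyz.ne]
    rcases hyef with rfl | rfl
    · exact (h'.perm (by grind) : CommonNeighbours G u v x z f' y).satisfiesHajos_of_adj_of_adj S
        hxy hyz
    · exact h'.satisfiesHajos_of_adj_of_adj S hxy hyz
  by_cases ha : G.neighborSet a ⊆ {u, v}
  · by_cases hbf : G.Adj b f
    · have hswap : CommonNeighbours G u v a b f e := h.perm (by grind)
      exact hswap.satisfiesHajos_of_neighborSet_subset S ha (h.not_adj_of_adj hmatch hbf)
    · exact h.satisfiesHajos_of_neighborSet_subset S ha hbf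
  obtain ⟨z, huz, hza, M, hM, hmeet⟩ := h.exists_isPath S.noCutVertex ha
  obtain ⟨e', f', h'⟩ := h.exists_of_adj ((h.left a).mpr (by simp)) huz hza.symm
  have hd' := h'.nodup
  have hua : G.Adj u a := (h.left a).mpr (by simp)
  have hva : G.Adj v a := (h.right a).mpr (by simp)
  have hvz : G.Adj v z := (h.adj_iff z).mp huz
  have hue : G.Adj u e' := (h'.left e').mpr (by simp)
  have huf : G.Adj u f' := (h'.left f').mpr (by simp)
  exact h'.satisfiesHajos_of_matching S hmatch hM
    (fun hu => (hmeet u hu (.inr (.inl rfl))).elim hua.ne huz.ne)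
    (fun hv => (hmeet v hv (.inr (.inr rfl))).elim hva.ne hvz.ne)
    (fun he => by have := hmeet e' he (.inl hue); grind)
    (fun hf => by have := hmeet f' hf (.inl huf); grind)

end CommonNeighbours

end CommonNeighbours

section CommonRest

variable {V : Type*} {G : SimpleGraph V} {u v t t₁ t₂ : V}

lemma snd_eq_penultimate_of_length_eq_two {p : G.Walk u v} (h : p.length = 2) :
    p.snd = p.penultimate := by
  rw [Walk.snd, Walk.penultimate, h]

lemma eq_snd_of_mem_support {p : G.Walk u v} (h : p.length = 2) {z : V} (hz : z ∈ p.support)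
    (hzu : z ≠ u) (hzv : z ≠ v) : z = p.snd := by
  obtain ⟨n, rfl, hn⟩ := Walk.mem_support_iff_exists_getVert.mp hz
  have h0 : n ≠ 0 := by
    rintro rfl
    exact hzu p.getVert_zero
  have h2 : n ≠ 2 := by
    rintro rfl
    exact hzv (h ▸ p.getVert_length)
  rw [show n = 1 by omega]

namespace Link

variable {L : Link G u v}

lemma adj_iff (L : Link G u v) (hne : u ≠ v) (w : V) : G.Adj u w ↔ w ∈ L.ends ∨ w ∈ L.rest := by
  have hends : w ∈ L.ends → G.Adj u w := by
    rintro (rfl | rfl)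
    exacts [adj_snd_of_ne hne _, adj_snd_of_ne hne _]
  by_cases hw : w ∈ L.ends
  · simp [hw, hends hw]
  · simp [rest, hw]

lemma IsReroutable.exists_adj [Finite V] (h : L.IsReroutable) (hne : u ≠ v) (hadj : ¬ G.Adj u v)
    (h4 : (G.neighborSet u).ncard ≤ 4) (ht : t ∈ L.rest) : ∃ d ∈ L.rest, G.Adj t d := by
  obtain ⟨-, -, -, c, hc, d, hd, -, hcd⟩ := h
  rw [L.rest_eq_pair hne hadj h4 hc hd hcd.ne] at ht
  rcases ht with rfl | rfl
  exacts [⟨d, hd, hcd⟩, ⟨c, hc, hcd.symm⟩]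

lemma IsMinimal.isBad_of_length_lt {L' : Link G u v} (h : L.IsMinimal)
    (hlt : L'.length < L.length) : L'.IsBad :=
  by_contra fun hL' => (h.2 L' hL').not_gt hlt

lemma exists_replace_left (L : Link G u v) (hne : u ≠ v) (hut : G.Adj u t) (hvt : G.Adj v t)
    (ht : t ∉ L.right.support) :
    ∃ L' : Link G u v, L'.ends = {t, L.right.snd} ∧ L'.reverse.ends = {t, L.right.penultimate} ∧
      L'.length = L.right.length + 2 := by
  refine ⟨⟨.cons hut (.cons hvt.symm .nil), L.right, ?_, L.isPath_right, fun z hz hr => ?_⟩,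
    ?_, ?_, ?_⟩
  · simp [Walk.cons_isPath_iff, hut.ne, hvt.ne', hne]
  · simp only [Walk.support_cons, Walk.support_nil, List.mem_cons, List.not_mem_nil,
      or_false] at hz
    grind
  · simp [ends]
  · simp [ends_reverse]
  · simp [length, add_comm]

lemma IsMinimal.badEnds_of_mem_inter (h : L.IsMinimal) (hne : u ≠ v) (hlen : 4 < L.length)
    (h₁ : t₁ ∈ L.rest ∩ L.reverse.rest) (h₂ : t₂ ∈ L.rest ∩ L.reverse.rest) (h₁₂ : t₁ ≠ t₂) :
    BadEnds G u {t₁, t₂} ∨ BadEnds G v {t₁, t₂} := by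
  have hu₁ : G.Adj u t₁ := h₁.1.1
  have hv₁ : G.Adj v t₁ := h₁.2.1
  obtain ⟨L', hends, hends', -, hlen'⟩ := exists_link_of_isPath hne hu₁ hv₁ h₂.1.1 h₂.2.1
    Walk.IsPath.nil (by simpa using hu₁.ne) (by simpa using hv₁.ne) (by simpa using h₁₂.symm)
  have hbad : L'.IsBad := h.isBad_of_length_lt (by simpa [hlen'] using hlen)
  rwa [Link.IsBad, hends, hends'] at hbad

lemma IsMinimal.not_badEnds_of_mem_left [Finite V] (h : L.IsMinimal) (hne : u ≠ v)
    (hadj : ¬ G.Adj u v) (h4 : (G.neighborSet u).ncard ≤ 4) (h₁ : t₁ ∈ L.rest) (h₂ : t₂ ∈ L.rest)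
    (h₁₂ : t₁ ≠ t₂) (hmem : t₁ ∈ L.left.support) : ¬ BadEnds G u {t₁, t₂} := by
  rw [mem_rest_iff] at h₁ h₂
  exact fun hbad => h₂.2.2 <| BadEnds.eq h4 h₁.1 h₂.1 (adj_snd_of_ne hne L.right) h₁₂ h₁.2.2 hbad
    (h.badEnds_of_mem_left hadj hmem h₁.1 h₁.2.1)

end Link

lemma BadEnds.pairwise_exclusive [Finite V] {a b c : V} (h4 : (G.neighborSet u).ncard ≤ 4)
    (ha : G.Adj u a) (hb : G.Adj u b) (hc : G.Adj u c) (hab : a ≠ b) (hac : a ≠ c) (hbc : b ≠ c) :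
    ¬ (BadEnds G u {a, b} ∧ BadEnds G u {a, c}) ∧ ¬ (BadEnds G u {a, b} ∧ BadEnds G u {b, c}) ∧
      ¬ (BadEnds G u {a, c} ∧ BadEnds G u {b, c}) := by
  refine ⟨fun h => hbc (h.1.eq h4 ha hb hc hab hac h.2), fun h => ?_, fun h => ?_⟩
  · rw [Set.pair_comm a b] at h
    exact hac (h.1.eq h4 hb ha hc hab.symm hbc h.2)
  · rw [Set.pair_comm a c, Set.pair_comm b c] at h
    exact hab (h.1.eq h4 hc ha hb hac.symm hbc.symm h.2)

namespace LowDegreePair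

variable [Finite V] {L : Link G u v}

lemma notMem_support_left (S : LowDegreePair G u v) (h : L.IsMinimal)
    (h₁ : t₁ ∈ L.rest ∩ L.reverse.rest) (h₂ : t₂ ∈ L.rest ∩ L.reverse.rest) (h₁₂ : t₁ ≠ t₂) :
    t₁ ∉ L.left.support := by
  intro hmem
  have hu₁ : G.Adj u t₁ := h₁.1.1
  have hv₁ : G.Adj v t₁ := h₁.2.1
  have hleft : L.left.length ≠ 2 := fun h2 =>
    (Link.mem_rest_iff.mp h₁.1).2.1 (eq_snd_of_mem_support h2 hmem hu₁.ne' hv₁.ne')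
  have hlen : 4 < L.length := by
    have hl := two_le_length_of_not_adj S.ne S.not_adj L.left
    have hr := two_le_length_of_not_adj S.ne S.not_adj L.right
    rw [Link.length]
    omega
  rcases h.badEnds_of_mem_inter S.ne hlen h₁ h₂ h₁₂ with hbad | hbad
  · exact h.not_badEnds_of_mem_left S.ne S.not_adj S.left_le h₁.1 h₂.1 h₁₂ hmem hbad
  · exact h.reverse.not_badEnds_of_mem_left S.symm.ne S.symm.not_adj S.right_le h₁.2 h₂.2 h₁₂
      (by simpa [Link.reverse] using hmem) hbad

-- If the right path is longer, each two of the paths `u, t₁, v`, `u, t₂, v` and `L.left` form a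
-- link shorter than `L`; two of these three links are bad at the same end.
lemma length_right_eq_two (S : LowDegreePair G u v) (h : L.IsMinimal)
    (h₁ : t₁ ∈ L.rest ∩ L.reverse.rest) (h₂ : t₂ ∈ L.rest ∩ L.reverse.rest) (h₁₂ : t₁ ≠ t₂) :
    L.right.length = 2 := by
  by_contra hlong
  have hl := two_le_length_of_not_adj S.ne S.not_adj L.left
  have hr := two_le_length_of_not_adj S.ne S.not_adj L.right
  have hbad := h.badEnds_of_mem_inter S.ne (by rw [Link.length]; omega) h₁ h₂ h₁₂
  have hbad_left : ∀ {t t'}, t ∈ L.rest ∩ L.reverse.rest → t' ∈ L.rest ∩ L.reverse.rest → t ≠ t' →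
      BadEnds G u {t, L.left.snd} ∨ BadEnds G v {t, L.left.penultimate} := by
    intro t t' ht ht' hne
    obtain ⟨L', hends, hends', hlen⟩ := L.swap.exists_replace_left S.ne ht.1.1 ht.2.1
      (S.notMem_support_left h ht ht' hne)
    have hL' : L'.IsBad := h.isBad_of_length_lt (by rw [hlen, Link.length, Link.swap]; grind)
    rwa [Link.IsBad, hends, hends'] at hL'
  have hu := BadEnds.pairwise_exclusive S.left_le h₁.1.1 h₂.1.1 (adj_snd_of_ne S.ne L.left) h₁₂
    (Link.mem_rest_iff.mp h₁.1).2.1 (Link.mem_rest_iff.mp h₂.1).2.1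
  have hv := BadEnds.pairwise_exclusive S.right_le h₁.2.1 h₂.2.1
    (adj_snd_of_ne S.symm.ne L.reverse.left) h₁₂
    (Link.mem_rest_iff.mp h₁.2).2.1 (Link.mem_rest_iff.mp h₂.2).2.1
  have hpen : L.reverse.left.snd = L.left.penultimate := Walk.snd_reverse _
  rw [hpen] at hv
  have hbad₁ := hbad_left h₁ h₂ h₁₂
  have hbad₂ := hbad_left h₂ h₁ h₁₂.symm
  tauto

lemma satisfiesHajos_of_mem_inter (S : LowDegreePair G u v) (h : L.IsMinimal)
    (h₁ : t₁ ∈ L.rest ∩ L.reverse.rest) (h₂ : t₂ ∈ L.rest ∩ L.reverse.rest) (h₁₂ : t₁ ≠ t₂) :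
    SatisfiesHajos G := by
  have hleft : L.left.length = 2 :=
    S.length_right_eq_two h.swap (by simpa using h₁) (by simpa using h₂) h₁₂
  have hright := S.length_right_eq_two h h₁ h₂ h₁₂
  have hrest := L.rest_eq_pair S.ne S.not_adj S.left_le h₁.1 h₂.1 h₁₂
  have hrest' := L.reverse.rest_eq_pair S.symm.ne S.symm.not_adj S.right_le h₁.2 h₂.2 h₁₂
  have hends' : L.reverse.ends = L.ends := by
    rw [Link.ends_reverse, Link.ends, snd_eq_penultimate_of_length_eq_two hleft,
      snd_eq_penultimate_of_length_eq_two hright]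
  have hcommon : CommonNeighbours G u v L.left.snd L.right.snd t₁ t₂ := by
    refine ⟨?_, fun w => ?_, fun w => ?_⟩
    · have hs := L.snd_ne S.ne S.not_adj
      have hn₁ := Link.mem_rest_iff.mp h₁.1
      have hn₂ := Link.mem_rest_iff.mp h₂.1
      grind
    · rw [L.adj_iff S.ne, hrest, Link.ends]
      simp [or_assoc]
    · rw [L.reverse.adj_iff S.symm.ne, hends', hrest', Link.ends]
      simp [or_assoc]
  exact hcommon.satisfiesHajos S

end LowDegreePair

end CommonRest

section SharedNeighbour

variable {V : Type*} [Finite V] {G : SimpleGraph V} {u v t d d' : V} {L : Link G u v}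

namespace LowDegreePair

lemma exists_isMinimal_replace_left (S : LowDegreePair G u v) (h : L.IsMinimal)
    (ht : t ∈ L.rest ∩ L.reverse.rest) (htL : t ∉ L.right.support) (hd : d ∈ L.rest)
    (htd : G.Adj t d) (hd' : d' ∈ L.reverse.rest) (htd' : G.Adj t d') :
    L.left.length = 2 ∧ ∃ L' : Link G u v, L'.IsMinimal ∧ L'.ends = {t, L.right.snd} ∧
      L'.reverse.ends = {t, L.right.penultimate} := by
  obtain ⟨L', hends, hends', hlen⟩ := L.exists_replace_left S.ne ht.1.1 ht.2.1 htL
  have hnot : ¬ L'.IsBad := by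
    have hu := Link.mem_rest_iff.mp ht.1
    have hv := Link.mem_rest_iff.mp ht.2
    have hpen : L.reverse.right.snd = L.right.penultimate := Walk.snd_reverse _
    rw [Link.IsBad, hends, hends', ← hpen, not_or]
    exact ⟨not_badEnds_of_adj S.left_le hu.1 (adj_snd_of_ne S.ne _) hd.1 hu.2.2
        (Link.mem_rest_iff.mp hd).2.2 htd,
      not_badEnds_of_adj S.right_le hv.1 (adj_snd_of_ne S.symm.ne _) hd'.1 hv.2.2
        (Link.mem_rest_iff.mp hd').2.2 htd'⟩
  have hle := h.2 L' hnot
  have hl := two_le_length_of_not_adj S.ne S.not_adj L.left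
  rw [hlen, Link.length] at hle
  refine ⟨by omega, L', ⟨hnot, fun L'' h'' => ?_⟩, hends, hends'⟩
  have hle' := h.2 L'' h''
  rw [Link.length] at hle'
  omega

lemma satisfiesHajos_of_not_adj_snd (S : LowDegreePair G u v) (h : L.IsMinimal)
    (ht : t ∈ L.rest ∩ L.reverse.rest) (htL : t ∉ L.right.support) (hd : d ∈ L.rest)
    (htd : G.Adj t d) (hd' : d' ∈ L.reverse.rest) (htd' : G.Adj t d') (hdd' : d ≠ d')
    (hadj : ¬ G.Adj L.left.snd d') : SatisfiesHajos G := by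
  obtain ⟨hlen, L', hmin, hends, hends'⟩ :=
    S.exists_isMinimal_replace_left h ht htL hd htd hd' htd'
  have hpen : L.reverse.left.snd = L.left.snd :=
    (Walk.snd_reverse _).trans (snd_eq_penultimate_of_length_eq_two hlen).symm
  have hpen' : L.reverse.right.snd = L.right.penultimate := Walk.snd_reverse _
  have hv := Link.mem_rest_iff.mp ht.2
  have hvd := Link.mem_rest_iff.mp hd'
  have hs := L.reverse.snd_ne S.symm.ne S.symm.not_adj
  have hvP := adj_snd_of_ne S.symm.ne L.reverse.left
  rw [hpen, hpen'] at hs hv hvd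
  rw [hpen] at hvP
  have hrest' : L'.reverse.rest = {L.left.snd, d'} := by
    refine L'.reverse.rest_eq_pair S.symm.ne S.symm.not_adj S.right_le ⟨hvP, ?_⟩ ⟨hvd.1, ?_⟩
      hvd.2.1.symm
    · simp [hends', hs, hv.2.1.symm]
    · simp [hends', htd'.ne', hvd.2.2]
  refine S.satisfiesHajos_of_isIndepSet_reverse hmin ?_ fun _ heq => ?_
  · rw [hrest', IsIndepSet, Set.pairwise_pair]
    exact fun _ => ⟨hadj, fun h => hadj h.symm⟩
  · have hud := Link.mem_rest_iff.mp hd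
    have hdL' : d ∈ L'.rest := ⟨hud.1, by simp [hends, htd.ne', hud.2.2]⟩
    rw [heq, hrest'] at hdL'
    exact absurd hdL' (not_or.mpr ⟨hud.2.1, hdd'⟩)

lemma satisfiesHajos_of_mem_inter_of_isReroutable (S : LowDegreePair G u v) (h : L.IsMinimal)
    (hu : L.IsReroutable) (hv : L.reverse.IsReroutable) (ht : t ∈ L.rest ∩ L.reverse.rest) :
    SatisfiesHajos G := by
  obtain ⟨d, hd, htd⟩ := hu.exists_adj S.ne S.not_adj S.left_le ht.1
  obtain ⟨d', hd', htd'⟩ := hv.exists_adj S.symm.ne S.symm.not_adj S.right_le ht.2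
  by_cases hdd' : d = d'
  · subst hdd'
    exact S.satisfiesHajos_of_mem_inter h ht ⟨hd, hd'⟩ htd.ne
  have htL : t ∉ L.verts := hu.1.notMem_of_mem_left ht.1
  have htr : t ∉ L.right.support := fun h => htL (.inr h)
  have htl : t ∉ L.left.support := fun h => htL (.inl h)
  have ht_swap : t ∈ L.swap.rest ∩ L.swap.reverse.rest := by simpa using ht
  have hd_swap : d ∈ L.swap.rest := by simpa using hd
  have hd'_swap : d' ∈ L.swap.reverse.rest := by simpa using hd'
  by_cases hPd : G.Adj L.left.snd d'
  swap
  · exact S.satisfiesHajos_of_not_adj_snd h ht htr hd htd hd' htd' hdd' hPd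
  by_cases hQd : G.Adj L.right.snd d'
  swap
  · exact S.satisfiesHajos_of_not_adj_snd h.swap ht_swap htl hd_swap htd hd'_swap htd' hdd' hQd
  have hP := (S.exists_isMinimal_replace_left h ht htr hd htd hd' htd').1
  have hQ : L.right.length = 2 :=
    (S.exists_isMinimal_replace_left h.swap ht_swap htl hd_swap htd hd'_swap htd').1
  have hvP := adj_snd_of_ne S.symm.ne L.left.reverse
  have hvQ := adj_snd_of_ne S.symm.ne L.right.reverse
  rw [Walk.snd_reverse, ← snd_eq_penultimate_of_length_eq_two hP] at hvP
  rw [Walk.snd_reverse, ← snd_eq_penultimate_of_length_eq_two hQ] at hvQ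
  have hut := Link.mem_rest_iff.mp ht.1
  have hvd' : G.Adj v d' := hd'.1
  have hud' : u ≠ d' := by
    rintro rfl
    exact S.not_adj hvd'.symm
  exact absurd hQd <| S.planar.not_adj_of_k33_delete_edge hut.2.1 hut.2.2
    (L.snd_ne S.ne S.not_adj) S.ne hud' hvd'.ne hut.1.symm ht.2.1.symm htd'
    (adj_snd_of_ne S.ne L.left).symm hvP.symm hPd (adj_snd_of_ne S.ne L.right).symm hvQ.symm

lemma satisfiesHajos (S : LowDegreePair G u v) : SatisfiesHajos G := by
  obtain ⟨L, h⟩ := Link.exists_isMinimal (S.noCutVertex.exists_not_isBad S.ne S.not_adj S.left_mem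
    S.right_mem S.left_le S.right_le)
  by_cases hdiff : L.rest = L.reverse.rest → L.rest = ∅
  swap
  · obtain ⟨heq, hne⟩ := Classical.not_imp.mp hdiff
    rcases L.rest_eq_empty_or_eq_pair S.even S.ne S.not_adj S.left_le with
      h0 | ⟨c, d, hcd, hrest⟩
    · exact absurd h0 hne
    · exact S.satisfiesHajos_of_mem_inter h (t₁ := c) (t₂ := d) (by simp [← heq, hrest])
        (by simp [← heq, hrest]) hcd
  rcases h.reverse.isIndepSet_or_isReroutable S.symm.ne S.symm.not_adj S.right_le with hv | hv
  · exact S.satisfiesHajos_of_isIndepSet_reverse h hv fun _ => hdiff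
  rcases h.isIndepSet_or_isReroutable S.ne S.not_adj S.left_le with hu | hu
  · refine S.symm.satisfiesHajos_of_isIndepSet_reverse h.reverse (by simpa using hu) fun _ heq => ?_
    rw [Link.reverse_reverse] at heq
    exact heq.trans (hdiff heq.symm)
  by_cases hdisj : Disjoint L.rest L.reverse.rest
  · exact S.satisfiesHajos_of_isReroutable hu hv hdisj
  · obtain ⟨t, ht⟩ := Set.not_disjoint_iff_nonempty_inter.mp hdisj
    exact S.satisfiesHajos_of_mem_inter_of_isReroutable h hu hv ht

end LowDegreePair

end SharedNeighbour

section Induction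

variable {V : Type*} [Finite V] {G : SimpleGraph V}

lemma satisfiesHajos_of_triangle (hp : IsPlanar G) (heven : IsEvenGraph G)
    (ih : HajosBelow V G.support.ncard) {a b c : V} (hab : G.Adj a b) (hbc : G.Adj b c)
    (hac : G.Adj a c) (ha : (G.neighborSet a).ncard = 2) (hb : (G.neighborSet b).ncard = 2) :
    SatisfiesHajos G := by
  have hFG : {s(a, b), s(b, c), s(c, a)} ⊆ G.edgeSet := by
    rintro e (rfl | rfl | rfl)
    exacts [hab, hbc, hac.symm]
  have isolated : ∀ {x y z : V}, (G.neighborSet x).ncard = 2 → G.Adj x y → G.Adj x z → y ≠ z →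
      {s(x, y), s(x, z)} ⊆ ({s(a, b), s(b, c), s(c, a)} : Set (Sym2 V)) →
      (G.deleteEdges {s(a, b), s(b, c), s(c, a)}).neighborSet x = ∅ := by
    intro x y z h2 hy hz hyz hF
    have hN : {y, z} = G.neighborSet x :=
      Set.eq_of_subset_of_ncard_le (Set.pair_subset hy hz) (by rw [Set.ncard_pair hyz, h2])
    refine Set.eq_empty_of_forall_notMem fun w hw => ?_
    rw [mem_neighborSet, deleteEdges_adj, ← mem_neighborSet, ← hN] at hw
    obtain ⟨rfl | rfl, hw⟩ := hw
    exacts [hw (hF (.inl rfl)), hw (hF (.inr rfl))]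
  have hia := isolated ha hab hac hbc.ne (by grind [Sym2.eq_swap])
  have hib := isolated hb hab.symm hbc hac.ne (by grind [Sym2.eq_swap])
  exact satisfiesHajos_of_deleteEdges hp heven ih
    (isCycleEdgeSet_triangle hab.ne hbc.ne hac.ne') hFG ⟨b, hab⟩ ⟨a, hab.symm⟩
    ⟨hab.ne, fun h => (hia ▸ h : b ∈ (∅ : Set V)), .inl hia, .inl hib, fun _ => hia⟩

lemma satisfiesHajos_of_hajosBelow (hp : IsPlanar G) (heven : IsEvenGraph G)
    (ih : HajosBelow V G.support.ncard) : SatisfiesHajos G := by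
  rcases G.support.eq_empty_or_nonempty with h0 | hne
  · have hbot : G.edgeSet = ∅ := edgeSet_eq_empty.mpr (G.support_eq_bot_iff.mp h0)
    rw [SatisfiesHajos, hbot]
    exact .nil _
  by_cases hcut : NoCutVertex G
  swap
  · exact satisfiesHajos_of_not_noCutVertex hp heven ih hcut
  rcases heven.exists_low_degree hp hne with
    ⟨u, v, huv, hadj, hu, hv, hu4, hv4⟩ | ⟨a, b, c, hab, hbc, hac, ha, hb, -⟩
  · exact LowDegreePair.satisfiesHajos ⟨hp, heven, ih, hcut, huv, hadj, hu, hv, hu4, hv4⟩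
  · exact satisfiesHajos_of_triangle hp heven ih hab hbc hac ha hb

lemma hajosBelow (s : ℕ) : HajosBelow V s := by
  induction s with
  | zero => exact fun _ _ _ h => absurd h (Nat.not_lt_zero _)
  | succ s ih =>
    exact fun G hp heven hs => satisfiesHajos_of_hajosBelow hp heven fun H hpH hevenH hH =>
      ih H hpH hevenH (by omega)

end Induction

/-- If `G` is a simple planar even graph on `n` vertices, then `E(G)` can be
partitioned into at most `⌊(n-1)/2⌋` cycles. -/
theorem statement_0 {V : Type*} [Fintype V] (G : SimpleGraph V)
    (hplanar : IsPlanar G)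
    (heven : ∀ v : V, Even (G.neighborSet v).ncard) :
    ∃ 𝒞 : Finset G.Subgraph,
      (∀ C ∈ 𝒞, IsCycleSubgraph C) ∧
      (∀ C ∈ 𝒞, ∀ C' ∈ 𝒞, C ≠ C' → Disjoint C.edgeSet C'.edgeSet) ∧
      (⋃ C ∈ 𝒞, C.edgeSet) = G.edgeSet ∧
      𝒞.card ≤ (Fintype.card V - 1) / 2 := by
  have hG : SatisfiesHajos G := satisfiesHajos_of_hajosBelow hplanar heven (hajosBelow _)
  have hle : G.support.ncard ≤ Fintype.card V := by
    rw [← Nat.card_eq_fintype_card]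
    exact Set.ncard_le_card _
  exact (hG.mono (by omega)).exists_finset subset_rfl
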